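/- Let m ≥ 1 and c ≥ 2 be fixed integers. There exists s0 = s0(m,c) such that for all integers s ≥ s0, setting n = ms + c and ℓ = s − c, the family Q(m,s,ℓ) is the unique shifted family attaining the maximum size among families F ⊆ 2^{[n]} with ν(F) < s: if F ⊆ 2^{[n]} is shifted, ν(F) < s, and |F| = |Q(m,s,ℓ)|, then F = Q(m,s,ℓ). -/

import Mathlib

/-!
Write `r = m - 1`, `N = ms - c - 1` and let `T = (N, n]` be the last `2c + 1` points. The weight
`|P| + |P ∩ [N]|` of a set counts the points of `[N]` twice and those of `T` once, so the whole of
`[n]` has weight `2ms - 1`, and `Q` consists of the sets of weight at least `2m`.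

Suppose first that `∅ ∉ F`, and let `G` be the up-closure of `F`. It is a shifted up-set without
`s` disjoint members and misses at most as many sets as `Q`, namely about `(2c + 2) C(N, r)`, which
is `O(n^r)`. The proof compares `G` with `Q` in two steps, `s` being large in terms of `m` and `c`.

*Stability.* Let `K = k + c` be a large constant. By shiftedness, an absent `(r+1)`-set in
`[n - K]` with at most one element beyond `n - s/2` would make too many sets absent
(`dense_layer`), so all such sets belong to `G`. For an `r`-set `A` in `[n - K]` consider the
down-set of those `B` in the last `K` points with `A ∪ B ∉ G`. Disjoint sets `A_1, …, A_k` with the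
same down-set cannot have disjoint extensions `A_i ∪ B_i` in `G`, as these could be completed to
`s` disjoint members by `(r+1)`-sets (`no_extension`). The question thus becomes the case `m = 1`
on `k + c` points: a down-set that leaves no `k` disjoint sets outside it has at least `2c + 2`
members, with equality only for `∅` and `2c + 1` singletons (`small_downset`; this needs `c ≥ 2`).
Hence the `r`-sets `A` with at most `2c + 2` missing extensions are standard, meaning that
`A ∪ {x}` is absent for every `x ∈ T`, up to `O(n^(r-1))` exceptions (`bad_bound`). Counting absent
sets, almost all `A` are standard, which already accounts for almost all absent sets, and standard
absent sets lie outside `Q`; therefore `G` misses only `O(n^(r-1))` members of `Q` (`stability`).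

*Exactness.* An absent member of `Q` of one of the simple shapes `IsFill` would by shiftedness
force `C(s/4, r)` members of `Q` to be absent, too many (`fill_mem`). If `G` contained a set outside
`Q`, it would contain a set of weight exactly `2m - 1` (`extend_to_weight`), and the other points
split exactly into `s - 1` sets of those simple shapes (`fill`): an `s`-matching.
So `F ⊆ G ⊆ Q`, and `F = Q` by cardinality.

If `∅ ∈ F`, replacing `∅` by an absent set `Y` of least element sum gives a shifted family without
`s`-matching (`exists_exchange`), which is `Q` by the first case. But `Q` without `Y` still has
`s - 1` disjoint members (`hasMatching_erase`), and these together with `∅` form an `s`-matching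
in `F`.
-/

open Finset

/-- The ground set `[n] = {1, …, n}`. -/
def ground (n : ℕ) : Finset ℕ := Finset.Icc 1 n

/-- `F` contains a matching of size `s`: `s` pairwise disjoint member sets. -/
def HasMatching (F : Finset (Finset ℕ)) (s : ℕ) : Prop :=
  ∃ M ⊆ F, M.card = s ∧ (M : Set (Finset ℕ)).PairwiseDisjoint id

/-- `A = (a₁ < … < a_k)` can be shifted to `B = (b₁ < … < b_k)`: same size and `bᵢ ≤ aᵢ`. -/
def CanShiftTo (A B : Finset ℕ) : Prop :=
  ∃ h : B.card = A.card, ∀ i : Fin A.card,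
    B.orderEmbOfFin h i ≤ A.orderEmbOfFin (rfl : A.card = A.card) i

/-- A family of subsets of the positive integers is shifted. -/
def IsShifted (F : Finset (Finset ℕ)) : Prop :=
  ∀ A ∈ F, ∀ B : Finset ℕ, 0 ∉ B → CanShiftTo A B → B ∈ F

/-- `Q(m,s,ℓ) = {P ⊆ [ms+c] : |P| + |P ∩ [ms−c−1]| ≥ 2m}` where `ℓ = s − c`. -/
def Qfam (m s c : ℕ) : Finset (Finset ℕ) :=
  (ground (m * s + c)).powerset.filter
    (fun P => 2 * m ≤ P.card + (P ∩ ground (m * s - c - 1)).card)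

/-- `W(m,s,ℓ) = {P ⊆ [ms+c] : |P ∩ [ms−1]| ≥ m}`. -/
def Wfam (m s c : ℕ) : Finset (Finset ℕ) :=
  (ground (m * s + c)).powerset.filter
    (fun P => m ≤ (P ∩ ground (m * s - 1)).card)

/-- `P(m,s,ℓ) = {P ⊆ [ms+c] : |P| + |P ∩ [ℓ−1]| ≥ m+1}` where `ℓ = s − c`. -/
def Pfam (m s c : ℕ) : Finset (Finset ℕ) :=
  (ground (m * s + c)).powerset.filter
    (fun P => m + 1 ≤ P.card + (P ∩ ground (s - c - 1)).card)

/-- `P'(m,s,ℓ) = ⋃_{i=m+1}^n ([n] choose i) ∪ ([mℓ−1] choose m)` where `ℓ = s − c`. -/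
def P'fam (m s c : ℕ) : Finset (Finset ℕ) :=
  (ground (m * s + c)).powerset.filter
    (fun P => m + 1 ≤ P.card ∨ (P.card = m ∧ P ⊆ ground (m * (s - c) - 1)))

/-- The deletion number `d(F)`: the least size of a set `X ⊆ [n]` whose removal kills
all `ℓ`-matchings in the `m`-th layer of `F`. -/
noncomputable def delNum (n m ℓ : ℕ) (F : Finset (Finset ℕ)) : ℕ :=
  sInf {d : ℕ | ∃ X ⊆ ground n, X.card = d ∧
    ¬ HasMatching (F.filter (fun A => A.card = m ∧ A ⊆ ground n \ X)) ℓ}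

/-- `y_F(i)`: the number of `i`-element subsets of `[n]` not in `F`. -/
def yF (n : ℕ) (F : Finset (Finset ℕ)) (i : ℕ) : ℕ :=
  (((ground n).powerset.filter (fun A => A.card = i)) \ F).card

/-! ### Shifted families and up-closures -/

/-- Closure under the elementary shifts `x ↦ y` with `1 ≤ y < x`. -/
def ElShift (G : Finset (Finset ℕ)) : Prop :=
  ∀ X ∈ G, ∀ x ∈ X, ∀ y, 1 ≤ y → y < x → y ∉ X → insert y (X.erase x) ∈ G

/-- No `s` pairwise disjoint members, the members being listed by an index type of size `s`
(so that repetitions of the empty set count as disjoint). -/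
def NoMatch (G : Finset (Finset ℕ)) (s : ℕ) : Prop :=
  ∀ (ι : Type) [Fintype ι], Fintype.card ι = s → ∀ X : ι → Finset ℕ, (∀ i, X i ∈ G) →
    ¬ Pairwise (fun i j => Disjoint (X i) (X j))

/-- The up-closure of `F` inside `2^[n]`. -/
def upc (n : ℕ) (F : Finset (Finset ℕ)) : Finset (Finset ℕ) :=
  (ground n).powerset.filter (fun X => ∃ A ∈ F, A ⊆ X)

lemma mem_ground {n x : ℕ} : x ∈ ground n ↔ 1 ≤ x ∧ x ≤ n := by simp [ground]

lemma card_ground (n : ℕ) : (ground n).card = n := by simp [ground]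

lemma ground_mono {a b : ℕ} (h : a ≤ b) : ground a ⊆ ground b := by
  intro x hx
  rw [mem_ground] at *
  omega

/-- An injection of `A` into an equally large `B` that never moves a point to the right witnesses
that `A` can be shifted to `B`; the comparison of the `i`-th elements is a counting argument. -/
lemma canShiftTo_of_inj (A B : Finset ℕ) (φ : ℕ → ℕ) (hcard : B.card = A.card)
    (hinj : Set.InjOn φ A) (hmap : ∀ a ∈ A, φ a ∈ B) (hle : ∀ a ∈ A, φ a ≤ a) :
    CanShiftTo A B := by
  refine ⟨hcard, fun i => ?_⟩
  by_contra hlt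
  push Not at hlt
  -- the `i + 1` least elements of `A` would be sent among the `i` least elements of `B`
  have hsub : (Finset.Iic i).image (fun j => φ (A.orderEmbOfFin rfl j)) ⊆
      (Finset.Iio i).image (fun j => B.orderEmbOfFin hcard j) := by
    intro y hy
    obtain ⟨j, hj, rfl⟩ := Finset.mem_image.1 hy
    have hjA : A.orderEmbOfFin rfl j ∈ A := Finset.orderEmbOfFin_mem _ _ _
    have h1 := hmap _ hjA
    have : φ (A.orderEmbOfFin rfl j) ∈ Set.range (B.orderEmbOfFin hcard) := by
      rw [Finset.range_orderEmbOfFin]; exact h1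
    obtain ⟨l, hl⟩ := this
    refine Finset.mem_image.2 ⟨l, ?_, hl⟩
    rw [Finset.mem_Iio, ← (B.orderEmbOfFin hcard).lt_iff_lt, hl]
    have h2 : A.orderEmbOfFin rfl j ≤ A.orderEmbOfFin rfl i :=
      (A.orderEmbOfFin rfl).monotone (Finset.mem_Iic.1 hj)
    exact lt_of_le_of_lt ((hle _ hjA).trans h2) hlt
  have hc := Finset.card_le_card hsub
  rw [Finset.card_image_of_injOn, Finset.card_image_of_injective _ (B.orderEmbOfFin hcard).injective,
    Fin.card_Iic, Fin.card_Iio] at hc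
  · omega
  · intro j _ l _ h
    exact (A.orderEmbOfFin rfl).injective
      (hinj (Finset.orderEmbOfFin_mem _ _ _) (Finset.orderEmbOfFin_mem _ _ _) h)

lemma IsShifted.elShift {n : ℕ} {F : Finset (Finset ℕ)} (hF : F ⊆ (ground n).powerset)
    (h : IsShifted F) : ElShift F := by
  intro X hX x hx y hy hyx hyX
  have h0 : 0 ∉ X := fun h0 => by
    have := mem_ground.1 (Finset.mem_powerset.1 (hF hX) h0); omega
  refine h X hX _ ?_ (canShiftTo_of_inj X _ (fun a => if a = x then y else a) ?_ ?_ ?_ ?_)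
  · simp only [Finset.mem_insert, Finset.mem_erase, not_or]
    exact ⟨by omega, fun h => h0 h.2⟩
  · rw [Finset.card_insert_of_notMem (fun h => hyX (Finset.mem_of_mem_erase h)),
      Finset.card_erase_add_one hx]
  · intro a ha b hb hab
    simp only at hab
    split_ifs at hab with h1 h2 h2
    · rw [h1, h2]
    · exact absurd (by rw [hab]; exact hb) hyX
    · exact absurd (by rw [← hab]; exact ha) hyX
    · exact hab
  · intro a ha
    split_ifs with h1
    · exact Finset.mem_insert_self _ _
    · exact Finset.mem_insert_of_mem (Finset.mem_erase.2 ⟨h1, ha⟩)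
  · intro a ha
    split_ifs with h1 <;> omega

lemma mem_upc {n : ℕ} {F : Finset (Finset ℕ)} {X : Finset ℕ} :
    X ∈ upc n F ↔ X ⊆ ground n ∧ ∃ A ∈ F, A ⊆ X := by
  simp [upc]

lemma ElShift.upc {n : ℕ} {F : Finset (Finset ℕ)} (h : ElShift F) : ElShift (upc n F) := by
  intro X hX x hx y hy hyx hyX
  obtain ⟨hXn, A, hA, hAX⟩ := mem_upc.1 hX
  refine mem_upc.2 ⟨?_, ?_⟩
  · intro z hz
    rcases Finset.mem_insert.1 hz with rfl | hz
    · have := mem_ground.1 (hXn hx)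
      exact mem_ground.2 (by omega)
    · exact hXn (Finset.mem_of_mem_erase hz)
  · by_cases hxA : x ∈ A
    · exact ⟨_, h A hA x hxA y hy hyx (fun h => hyX (hAX h)),
        Finset.insert_subset_insert _ (Finset.erase_subset_erase _ hAX)⟩
    · refine ⟨A, hA, fun z hz => Finset.mem_insert_of_mem (Finset.mem_erase.2 ⟨?_, hAX hz⟩)⟩
      rintro rfl
      exact hxA hz

/-- Since `∅ ∉ F`, disjoint sets containing members of `F` contain pairwise distinct members, so an
indexed matching in the up-closure gives a genuine set of disjoint members of `F`. -/
lemma hasMatching_of_indexed {ι : Type} [Fintype ι] {F : Finset (Finset ℕ)} (h0 : ∅ ∉ F)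
    (X : ι → Finset ℕ) (hd : Pairwise (fun i j => Disjoint (X i) (X j)))
    (hX : ∀ i, ∃ A ∈ F, A ⊆ X i) : HasMatching F (Fintype.card ι) := by
  choose A hA hAX using hX
  have hdA : Pairwise (fun i j => Disjoint (A i) (A j)) := fun i j hij =>
    Finset.disjoint_of_subset_left (hAX i) (Finset.disjoint_of_subset_right (hAX j) (hd hij))
  have hinj : Function.Injective A := by
    intro i j hij
    by_contra hne
    have h1 : Disjoint (A i) (A j) := hdA hne
    rw [hij, disjoint_self, Finset.bot_eq_empty] at h1
    exact h0 (h1 ▸ hA j)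
  refine ⟨Finset.univ.image A, ?_, ?_, ?_⟩
  · intro B hB
    obtain ⟨i, -, rfl⟩ := Finset.mem_image.1 hB
    exact hA i
  · rw [Finset.card_image_of_injective _ hinj, Finset.card_univ]
  · intro B hB C hC hBC
    simp only [Finset.coe_image, Finset.coe_univ, Set.image_univ, Set.mem_range] at hB hC
    obtain ⟨i, rfl⟩ := hB
    obtain ⟨j, rfl⟩ := hC
    exact hdA (fun h => hBC (by rw [h]))

lemma noMatch_upc {n s : ℕ} {F : Finset (Finset ℕ)} (h0 : ∅ ∉ F) (h : ¬ HasMatching F s) :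
    NoMatch (upc n F) s := by
  intro ι _ hι X hX hd
  exact h (hι ▸ hasMatching_of_indexed h0 X hd (fun i => (mem_upc.1 (hX i)).2))

/-- Elementary shifts carry a block `B` onto any equally large block `A` to its left. -/
lemma ElShift.block {G : Finset (Finset ℕ)} (hG : ElShift G) :
    ∀ (k : ℕ) (S A B : Finset ℕ), A.card = k → B.card = k → (∀ a ∈ A, 1 ≤ a) →
      (∀ a ∈ A, ∀ b ∈ B, a < b) → Disjoint S A → Disjoint S B → S ∪ B ∈ G → S ∪ A ∈ G := by
  intro k
  induction k with
  | zero =>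
    intro S A B hA hB _ _ _ _ h
    rw [Finset.card_eq_zero] at hA hB
    rw [hA, ← hB]; exact h
  | succ k ih =>
    intro S A B hA hB h1 hlt hSA hSB h
    obtain ⟨a, ha⟩ : A.Nonempty := Finset.card_pos.1 (by omega)
    obtain ⟨b, hb⟩ : B.Nonempty := Finset.card_pos.1 (by omega)
    have haS : a ∉ S := fun h => Finset.disjoint_left.1 hSA h ha
    have hbS : b ∉ S := fun h => Finset.disjoint_left.1 hSB h hb
    have haB : a ∉ B := fun h => lt_irrefl _ (hlt a ha a h)
    have key := hG _ h b (Finset.mem_union_right _ hb) a (h1 a ha) (hlt a ha b hb)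
      (by simp [haS, haB])
    have e1 : insert a ((S ∪ B).erase b) = insert a S ∪ B.erase b := by
      ext z
      simp only [Finset.mem_insert, Finset.mem_erase, Finset.mem_union]
      constructor
      · rintro (h | ⟨h2, h3 | h3⟩) <;> tauto
      · rintro ((h | h) | h)
        · tauto
        · refine Or.inr ⟨?_, Or.inl h⟩
          rintro rfl
          exact hbS h
        · tauto
    rw [e1] at key
    have := ih (insert a S) (A.erase a) (B.erase b) (by rw [Finset.card_erase_of_mem ha]; omega)
      (by rw [Finset.card_erase_of_mem hb]; omega)
      (fun x hx => h1 x (Finset.mem_of_mem_erase hx))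
      (fun x hx y hy => hlt x (Finset.mem_of_mem_erase hx) y (Finset.mem_of_mem_erase hy))
      (by
        rw [Finset.disjoint_insert_left]
        exact ⟨Finset.notMem_erase _ _, Finset.disjoint_of_subset_right (Finset.erase_subset _ _) hSA⟩)
      (by
        rw [Finset.disjoint_insert_left]
        exact ⟨fun h => haB (Finset.mem_of_mem_erase h),
          Finset.disjoint_of_subset_right (Finset.erase_subset _ _) hSB⟩) key
    rwa [Finset.insert_union, ← Finset.union_insert, Finset.insert_erase ha] at this

/-- If `B' ∪ {z}` lies in the shifted family, `z` being beyond the block `B'`, so does every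
`A' ∪ {a}` with `a ≤ z` and `A'` to the left of `B'`; here `a` may fall inside `B'`. -/
lemma ElShift.block_insert {G : Finset (Finset ℕ)} (hG : ElShift G) {r u v z a : ℕ}
    {A' B' : Finset ℕ} (hA : A'.card = r) (hB : B'.card = r) (hA1 : A' ⊆ ground u)
    (hB1 : B' ⊆ Finset.Ioc u v) (huv : u ≤ v) (hz : v < z) (ha1 : 1 ≤ a) (haz : a ≤ z)
    (haA : a ∉ A') (h : insert z B' ∈ G) : insert a A' ∈ G := by
  have hzB : z ∉ B' := fun h => by
    have := Finset.mem_Ioc.1 (hB1 h); omega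
  have hS : ∀ C : Finset ℕ, C.card = r → (∀ x ∈ C, u < x) → a ∉ C → insert a C ∈ G →
      insert a A' ∈ G := by
    intro C hC hCu haC hm
    rw [Finset.insert_eq] at hm ⊢
    refine hG.block r {a} A' C hA hC (fun x hx => (mem_ground.1 (hA1 hx)).1) ?_ ?_ ?_ hm
    · intro x hx y hy
      have := (mem_ground.1 (hA1 hx)).2
      have := hCu y hy
      omega
    · simpa using haA
    · simpa using haC
  -- if `a` is already present it is kept and all other points move; otherwise `z` moves to `a` first
  by_cases haB : a ∈ insert z B'
  · refine hS ((insert z B').erase a) ?_ ?_ (Finset.notMem_erase _ _) ?_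
    · rw [Finset.card_erase_of_mem haB, Finset.card_insert_of_notMem hzB]; omega
    · intro x hx
      rcases Finset.mem_insert.1 (Finset.mem_of_mem_erase hx) with rfl | hx
      · omega
      · exact (Finset.mem_Ioc.1 (hB1 hx)).1
    · rwa [Finset.insert_erase haB]
  · have h1 : a ≠ z := fun h => haB (by simp [h])
    have h2 : a ∉ B' := fun h => haB (by simp [h])
    refine hS B' hB (fun x hx => (Finset.mem_Ioc.1 (hB1 hx)).1) h2 ?_
    have := hG _ h z (Finset.mem_insert_self _ _) a ha1 (by omega) haB
    rwa [Finset.erase_insert hzB] at this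

/-! ### Partitions, disjoint members and counting -/

/-- A set of `r q` points splits into `q` blocks of size `r`, each with at most one point of a
prescribed set `H` of at most `q` points. -/
lemma partition_lemma (r : ℕ) : ∀ (q : ℕ) (R H : Finset ℕ), R.card = r * q → H ⊆ R → H.card ≤ q →
    ∃ f : Fin q → Finset ℕ, (∀ i, (f i).card = r ∧ f i ⊆ R ∧ (f i ∩ H).card ≤ 1) ∧
      Pairwise (fun i j => Disjoint (f i) (f j)) := by
  intro q
  induction q with
  | zero =>
    intro R H _ _ _
    exact ⟨fun i => i.elim0, fun i => i.elim0, fun i => i.elim0⟩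
  | succ q ih =>
    intro R H hR hH hHq
    -- the first block takes one point of `H` if there is one, so that `H` shrinks with `q`
    obtain ⟨C, hC, hCR, hCH, hH'⟩ : ∃ C : Finset ℕ, C.card = r ∧ C ⊆ R ∧ (C ∩ H).card ≤ 1 ∧
        (H \ C).card ≤ q := by
      rcases Finset.eq_empty_or_nonempty H with rfl | ⟨x, hx⟩
      · obtain ⟨C, hCR, hC⟩ := Finset.exists_subset_card_eq (s := R) (n := r)
          (by rw [hR]; exact Nat.le_mul_of_pos_right _ (by omega))
        exact ⟨C, hC, hCR, by simp, by simp⟩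
      · have hpos : 0 < R.card := Finset.card_pos.2 ⟨x, hH hx⟩
        obtain ⟨r', rfl⟩ : ∃ r', r = r' + 1 := by
          rcases r with _ | r'
          · simp at hR; simp [hR] at hpos
          · exact ⟨r', rfl⟩
        have hRH : (R \ H).card = R.card - H.card := Finset.card_sdiff_of_subset hH
        obtain ⟨C, hCR, hC⟩ := Finset.exists_subset_card_eq (s := R \ H) (n := r') (by
          rw [hRH, hR]
          have : (r' + 1) * (q + 1) = r' * q + r' + (q + 1) := by ring
          omega)
        have hCR' : ∀ y ∈ C, y ∈ R ∧ y ∉ H := fun y hy => Finset.mem_sdiff.1 (hCR hy)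
        have hxC : x ∉ C := fun h => (hCR' x h).2 hx
        refine ⟨insert x C, by rw [Finset.card_insert_of_notMem hxC, hC], ?_, ?_, ?_⟩
        · intro y hy
          rcases Finset.mem_insert.1 hy with rfl | hy
          · exact hH hx
          · exact (hCR' y hy).1
        · have : insert x C ∩ H ⊆ {x} := by
            intro y hy
            obtain ⟨h1, h2⟩ := Finset.mem_inter.1 hy
            rcases Finset.mem_insert.1 h1 with rfl | h1
            · simp
            · exact absurd h2 (hCR' y h1).2
          simpa using Finset.card_le_card this
        · have : H \ insert x C ⊆ H.erase x := by
            intro y hy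
            simp only [Finset.mem_sdiff, Finset.mem_insert, not_or] at hy
            exact Finset.mem_erase.2 ⟨hy.2.1, hy.1⟩
          have := Finset.card_le_card this
          rw [Finset.card_erase_of_mem hx] at this
          omega
    obtain ⟨f, hf, hd⟩ := ih (R \ C) (H \ C)
      (by rw [Finset.card_sdiff_of_subset hCR, hR, hC]; rw [Nat.mul_succ]; omega)
      (Finset.sdiff_subset_sdiff hH le_rfl) hH'
    have hdC : ∀ i, Disjoint C (f i) := fun i =>
      Finset.disjoint_of_subset_right (hf i).2.1 Finset.disjoint_sdiff
    refine ⟨Fin.cons C f, ?_, ?_⟩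
    · intro i
      refine Fin.cases ?_ (fun i => ?_) i
      · exact ⟨hC, hCR, hCH⟩
      · refine ⟨(hf i).1, (hf i).2.1.trans Finset.sdiff_subset, ?_⟩
        refine le_trans (Finset.card_le_card ?_) (hf i).2.2
        intro y hy
        obtain ⟨h1, h2⟩ := Finset.mem_inter.1 hy
        simp only [Fin.cons_succ] at h1
        exact Finset.mem_inter.2 ⟨h1, Finset.mem_sdiff.2
          ⟨h2, (Finset.mem_sdiff.1 ((hf i).2.1 h1)).2⟩⟩
    · intro i j
      refine Fin.cases ?_ (fun i => ?_) i <;> refine Fin.cases ?_ (fun j => ?_) j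
      · intro h; exact absurd rfl h
      · intro _; simpa using hdC j
      · intro _; simpa using (hdC i).symm
      · intro h; simpa using hd (fun e => h (by rw [e]))

/-- Few `r`-subsets of an `n`-set meet a given set `W`: at most `|W| n^(r-1)`, written without
subtraction so as to cover `r = 0`. -/
lemma touching_bound (E W : Finset ℕ) (r n : ℕ) (hE : E.card ≤ n) :
    ((E.powersetCard r).filter (fun A => ¬ Disjoint A W)).card * n ≤ W.card * n ^ r := by
  rcases r with _ | r
  · have h0 : (E.powersetCard 0).filter (fun A => ¬ Disjoint A W) = ∅ := by
      ext A; simp +contextual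
    rw [h0]; simp
  · have h1 : ((E.powersetCard (r + 1)).filter (fun A => ¬ Disjoint A W)) ⊆
        W.biUnion (fun w => (E.powersetCard r).image (fun A => insert w A)) := by
      intro A hA
      obtain ⟨hA, hW⟩ := Finset.mem_filter.1 hA
      obtain ⟨w, hwA, hwW⟩ := Finset.not_disjoint_iff.1 hW
      obtain ⟨hAE, hAc⟩ := Finset.mem_powersetCard.1 hA
      refine Finset.mem_biUnion.2 ⟨w, hwW, Finset.mem_image.2 ⟨A.erase w, ?_, ?_⟩⟩
      · rw [Finset.mem_powersetCard, Finset.card_erase_of_mem hwA]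
        exact ⟨(Finset.erase_subset _ _).trans hAE, by omega⟩
      · exact Finset.insert_erase hwA
    have h2 : ((E.powersetCard (r + 1)).filter (fun A => ¬ Disjoint A W)).card ≤ W.card * n ^ r := by
      refine (Finset.card_le_card h1).trans (Finset.card_biUnion_le_card_mul _ _ _ ?_)
      intro w _
      refine Finset.card_image_le.trans ?_
      rw [Finset.card_powersetCard]
      exact (Nat.choose_le_pow _ _).trans (Nat.pow_le_pow_left hE _)
    calc _ ≤ W.card * n ^ r * n := Nat.mul_le_mul_right _ h2
      _ = _ := by ring

/-- A family of `r`-sets with more than `k r n^(r-1)` members contains `k` disjoint ones. -/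
lemma greedy (E : Finset ℕ) (r n : ℕ) (hE : E.card ≤ n) (𝒜 : Finset (Finset ℕ))
    (h𝒜 : 𝒜 ⊆ E.powersetCard r) : ∀ k : ℕ, k * r * n ^ r < 𝒜.card * n →
      ∃ f : Fin k → Finset ℕ, (∀ i, f i ∈ 𝒜) ∧ Pairwise (fun i j => Disjoint (f i) (f j)) := by
  intro k
  induction k with
  | zero => exact fun _ => ⟨fun i => i.elim0, fun i => i.elim0, fun i => i.elim0⟩
  | succ k ih =>
    intro h
    have hk : k * r * n ^ r < 𝒜.card * n := by
      refine lt_of_le_of_lt ?_ h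
      gcongr
      omega
    obtain ⟨f, hf, hd⟩ := ih hk
    set W := Finset.univ.biUnion f with hW
    have hWc : W.card ≤ k * r := by
      refine (Finset.card_biUnion_le_card_mul _ _ r ?_).trans (by simp)
      intro i _
      exact (Finset.mem_powersetCard.1 (h𝒜 (hf i))).2.le
    have ht := touching_bound E W r n hE
    obtain ⟨A, hA, hAW⟩ : ∃ A ∈ 𝒜, Disjoint A W := by
      by_contra hcon
      push Not at hcon
      have hsub : 𝒜 ⊆ (E.powersetCard r).filter (fun A => ¬ Disjoint A W) := fun A hA =>
        Finset.mem_filter.2 ⟨h𝒜 hA, hcon A hA⟩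
      have h1 := Nat.mul_le_mul_right n (Finset.card_le_card hsub)
      have h2 : W.card * n ^ r ≤ k * r * n ^ r := Nat.mul_le_mul_right _ hWc
      omega
    have hAf : ∀ i, Disjoint A (f i) := fun i =>
      Finset.disjoint_of_subset_right (Finset.subset_biUnion_of_mem f (Finset.mem_univ i)) hAW
    refine ⟨Fin.cons A f, ?_, ?_⟩
    · intro i
      refine Fin.cases ?_ (fun i => ?_) i
      · exact hA
      · exact hf i
    · intro i j
      refine Fin.cases ?_ (fun i => ?_) i <;> refine Fin.cases ?_ (fun j => ?_) j
      · intro h; exact absurd rfl h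
      · intro _; simpa using hAf j
      · intro _; simpa using (hAf i).symm
      · intro h; simpa using hd (fun e => h (by rw [e]))

/-- Double counting: the sets `A ∪ B` with `A ∈ 𝒜` inside `E` and `B ∈ U A` inside the disjoint set
`W` are pairwise distinct. -/
lemma sum_card_le_of_union (E W : Finset ℕ) (hEW : Disjoint E W) (𝒜 : Finset (Finset ℕ))
    (h𝒜 : ∀ A ∈ 𝒜, A ⊆ E) (U : Finset ℕ → Finset (Finset ℕ)) (hU : ∀ A ∈ 𝒜, ∀ B ∈ U A, B ⊆ W)
    (X : Finset (Finset ℕ)) (hX : ∀ A ∈ 𝒜, ∀ B ∈ U A, A ∪ B ∈ X) :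
    ∑ A ∈ 𝒜, (U A).card ≤ X.card := by
  rw [← Finset.card_sigma]
  refine Finset.card_le_card_of_injOn (fun p => p.1 ∪ p.2) ?_ ?_
  · rintro ⟨A, B⟩ h
    obtain ⟨h1, h2⟩ := Finset.mem_sigma.1 h
    exact hX A h1 B h2
  · rintro ⟨A, B⟩ h ⟨A', B'⟩ h' heq
    obtain ⟨h1, h2⟩ := Finset.mem_sigma.1 h
    obtain ⟨h1', h2'⟩ := Finset.mem_sigma.1 h'
    simp only at heq h1 h2 h1' h2'
    have key : ∀ A B A' B' : Finset ℕ, A ⊆ E → B ⊆ W → A' ⊆ E → B' ⊆ W → A ∪ B = A' ∪ B' →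
        A ⊆ A' ∧ B ⊆ B' := by
      intro A B A' B' hA hB hA' hB' e
      constructor
      · intro x hx
        have : x ∈ A' ∪ B' := e ▸ Finset.mem_union_left _ hx
        rcases Finset.mem_union.1 this with h | h
        · exact h
        · exact absurd (hB' h) (Finset.disjoint_left.1 hEW (hA hx))
      · intro x hx
        have : x ∈ A' ∪ B' := e ▸ Finset.mem_union_right _ hx
        rcases Finset.mem_union.1 this with h | h
        · exact absurd (hB hx) (Finset.disjoint_left.1 hEW (hA' h))
        · exact h
    have k1 := key A B A' B' (h𝒜 A h1) (hU A h1 B h2) (h𝒜 A' h1') (hU A' h1' B' h2') heq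
    have k2 := key A' B' A B (h𝒜 A' h1') (hU A' h1' B' h2') (h𝒜 A h1) (hU A h1 B h2) heq.symm
    obtain rfl := Finset.Subset.antisymm k1.1 k2.1
    obtain rfl := Finset.Subset.antisymm k1.2 k2.2
    rfl

/-! ### The case `m = 1` for down-sets -/

/-- Among `2k + e` points with at most `e + 1` forbidden pairs, `k ≥ 2` disjoint allowed pairs
exist: deleting a point of a forbidden pair `e` times leaves at most one forbidden pair. -/
lemma pair_lemma (k : ℕ) (hk : 2 ≤ k) : ∀ (e : ℕ) (S : Finset ℕ) (P : Finset (Finset ℕ)),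
    S.card = 2 * k + e → P.card ≤ e + 1 →
    ∃ f : Fin k → Finset ℕ, (∀ i, (f i).card = 2 ∧ f i ⊆ S ∧ f i ∉ P) ∧
      Pairwise (fun i j => Disjoint (f i) (f j)) := by
  intro e
  induction e with
  | zero =>
    intro S P hS hP
    by_cases h : ∃ p ∈ P, p ⊆ S ∧ p.card = 2
    · obtain ⟨p, hp, hpS, hp2⟩ := h
      obtain ⟨f, hf, hd⟩ := partition_lemma 2 k S p (by omega) hpS (by omega)
      refine ⟨f, fun i => ⟨(hf i).1, (hf i).2.1, fun hi => ?_⟩, hd⟩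
      have : f i = p := Finset.card_le_one.1 (by omega) _ hi _ hp
      have h1 := (hf i).2.2
      rw [this, Finset.inter_self] at h1
      omega
    · push Not at h
      obtain ⟨f, hf, hd⟩ := partition_lemma 2 k S ∅ (by omega) (by simp) (by simp)
      exact ⟨f, fun i => ⟨(hf i).1, (hf i).2.1, fun hi => h _ hi (hf i).2.1 (hf i).1⟩, hd⟩
  | succ e ih =>
    intro S P hS hP
    obtain ⟨v, hv, hvP⟩ : ∃ v ∈ S,
        (P.filter (fun p => p ⊆ S.erase v ∧ p.card = 2)).card ≤ e + 1 := by
      by_cases h : ∃ p ∈ P, p ⊆ S ∧ p.card = 2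
      · obtain ⟨p, hp, hpS, hp2⟩ := h
        obtain ⟨v, hv⟩ : p.Nonempty := Finset.card_pos.1 (by omega)
        refine ⟨v, hpS hv, ?_⟩
        have : P.filter (fun p => p ⊆ S.erase v ∧ p.card = 2) ⊆ P.erase p := by
          intro p' hp'
          obtain ⟨h1, h2, -⟩ := Finset.mem_filter.1 hp'
          refine Finset.mem_erase.2 ⟨?_, h1⟩
          rintro rfl
          exact Finset.notMem_erase v S (h2 hv)
        have := Finset.card_le_card this
        rw [Finset.card_erase_of_mem hp] at this
        omega
      · push Not at h
        obtain ⟨v, hv⟩ : S.Nonempty := Finset.card_pos.1 (by omega)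
        refine ⟨v, hv, ?_⟩
        rw [Finset.filter_eq_empty_iff.2]
        · simp
        · rintro p hp ⟨h1, h2⟩
          exact h p hp (h1.trans (Finset.erase_subset _ _)) h2
    obtain ⟨f, hf, hd⟩ := ih (S.erase v) _ (by rw [Finset.card_erase_of_mem hv]; omega) hvP
    refine ⟨f, fun i => ⟨(hf i).1, (hf i).2.1.trans (Finset.erase_subset _ _), fun hi => ?_⟩, hd⟩
    exact (hf i).2.2 (Finset.mem_filter.2 ⟨hi, (hf i).2.1, (hf i).1⟩)

lemma append_pairwise {p q : ℕ} (f : Fin p → Finset ℕ) (g : Fin q → Finset ℕ)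
    (X Y : Finset ℕ) (hXY : Disjoint X Y) (hf : ∀ i, f i ⊆ X) (hg : ∀ i, g i ⊆ Y)
    (hdf : Pairwise (fun i j => Disjoint (f i) (f j)))
    (hdg : Pairwise (fun i j => Disjoint (g i) (g j))) :
    Pairwise (fun i j => Disjoint (Fin.append f g i) (Fin.append f g j)) := by
  have hfg : ∀ i j, Disjoint (f i) (g j) := fun i j =>
    Finset.disjoint_of_subset_left (hf i) (Finset.disjoint_of_subset_right (hg j) hXY)
  intro i j
  refine Fin.addCases (fun i => ?_) (fun i => ?_) i <;>
    refine Fin.addCases (fun j => ?_) (fun j => ?_) j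
  · intro h; simpa using hdf (fun e => h (by rw [e]))
  · intro _; simpa using hfg i j
  · intro _; simpa using (hfg j i).symm
  · intro h; simpa using hdg (fun e => h (by rw [e]))

/-- The case `m = 1` of the problem, for a down-set `U` of missing sets on `k + c` points: if
`U` has at most `2c + 2` members and is not `∅` together with `2c + 1` singletons, then `k`
disjoint sets avoid `U`. -/
lemma small_downset (c k : ℕ) (hc : 2 ≤ c) (W : Finset ℕ) (hW : W.card = k + c)
    (U : Finset (Finset ℕ)) (hdown : ∀ B ∈ U, ∀ B' ⊆ B, B' ∈ U) (hU : U.card ≤ 2 * c + 2)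
    (hns : ∅ ∈ U → (W.filter (fun x => {x} ∈ U)).card ≠ 2 * c + 1) :
    ∃ f : Fin k → Finset ℕ, (∀ i, f i ⊆ W ∧ f i ∉ U) ∧
      Pairwise (fun i j => Disjoint (f i) (f j)) := by
  by_cases h0 : ∅ ∈ U
  swap
  · exact ⟨fun _ => ∅, fun i => ⟨by simp, h0⟩, fun i j _ => by simp⟩
  -- `S` holds the points whose singletons are missing, `V` the missing sets of size at most one
  have hns := hns h0
  set S := W.filter (fun x => {x} ∈ U) with hS
  have hSW : S ⊆ W := Finset.filter_subset _ _
  set V : Finset (Finset ℕ) := insert ∅ (S.image (fun x => {x})) with hV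
  have hVU : V ⊆ U := by
    intro B hB
    rcases Finset.mem_insert.1 hB with rfl | hB
    · exact h0
    · obtain ⟨x, hx, rfl⟩ := Finset.mem_image.1 hB
      exact (Finset.mem_filter.1 hx).2
  have hVc : V.card = S.card + 1 := by
    rw [hV, Finset.card_insert_of_notMem, Finset.card_image_of_injective]
    · exact Finset.singleton_injective
    · simp
  have hVle := Finset.card_le_card hVU
  have hsing : ∀ B : Finset ℕ, B ⊆ W \ S → B.card = 1 → B ∉ U := by
    intro B hB hB1 hBU
    obtain ⟨x, rfl⟩ := Finset.card_eq_one.1 hB1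
    have := Finset.mem_sdiff.1 (Finset.singleton_subset_iff.1 hB)
    exact this.2 (Finset.mem_filter.2 ⟨this.1, hBU⟩)
  have hWS : (W \ S).card = W.card - S.card := Finset.card_sdiff_of_subset hSW
  rcases Nat.lt_or_ge c S.card with hcS | hcS
  -- more than `c` missing singletons: use the other singletons, and `k'` larger sets inside `S`
  · have hSWc := Finset.card_le_card hSW
    obtain ⟨k', hk'⟩ : ∃ k', S.card = c + k' := ⟨S.card - c, by omega⟩
    obtain ⟨q, rfl⟩ : ∃ q, k = q + k' := ⟨k - k', by omega⟩
    obtain ⟨f, hf, hdf⟩ := partition_lemma 1 q (W \ S) ∅ (by omega) (by simp) (by simp)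
    obtain ⟨g, hg, hdg⟩ : ∃ g : Fin k' → Finset ℕ, (∀ i, g i ⊆ S ∧ g i ∉ U) ∧
        Pairwise (fun i j => Disjoint (g i) (g j)) := by
      rcases Nat.lt_or_ge k' 2 with h2 | h2
      -- a single set suffices: `S` itself, which has more than `2c + 2` subsets
      · obtain rfl : k' = 1 := by omega
        refine ⟨fun _ => S, fun i => ⟨le_rfl, fun hSU => ?_⟩,
          fun i j hij => absurd (Subsingleton.elim i j) hij⟩
        have h1 : S.powerset ⊆ U := fun B hB => hdown S hSU B (Finset.mem_powerset.1 hB)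
        have h3 := Finset.card_le_card h1
        rw [Finset.card_powerset, hk'] at h3
        have h4 : 2 * c + 2 < 2 ^ (c + 1) := by
          clear * - hc
          induction c, hc using Nat.le_induction with
          | base => norm_num
          | succ n hn ih => rw [pow_succ]; omega
        omega
      -- at most `2c + 1 - |S|` pairs are missing, so `pair_lemma` finds `k'` allowed pairs in `S`
      · obtain ⟨g, hg, hdg⟩ := pair_lemma k' h2 (2 * c - S.card) S (U \ V) (by omega)
          (by rw [Finset.card_sdiff_of_subset hVU]; omega)
        refine ⟨g, fun i => ⟨(hg i).2.1, fun hi => (hg i).2.2 (Finset.mem_sdiff.2 ⟨hi, ?_⟩)⟩, hdg⟩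
        intro hiV
        have h2 := (hg i).1
        rcases Finset.mem_insert.1 hiV with h | h
        · rw [h] at h2; simp at h2
        · obtain ⟨x, -, hx⟩ := Finset.mem_image.1 h
          rw [← hx] at h2; simp at h2
    refine ⟨Fin.append f g, ?_, append_pairwise f g (W \ S) S Finset.sdiff_disjoint
      (fun i => (hf i).2.1) (fun i => (hg i).1) hdf hdg⟩
    intro i
    refine Fin.addCases (fun i => ?_) (fun i => ?_) i
    · rw [Fin.append_left]
      exact ⟨(hf i).2.1.trans Finset.sdiff_subset, hsing _ (hf i).2.1 (hf i).1⟩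
    · rw [Fin.append_right]
      exact ⟨(hg i).1.trans hSW, (hg i).2⟩
  -- at most `c` missing singletons: at least `k` singletons remain
  · obtain ⟨Z, hZ, hZc⟩ := Finset.exists_subset_card_eq (s := W \ S) (n := k) (by omega)
    obtain ⟨f, hf, hd⟩ := partition_lemma 1 k Z ∅ (by omega) (by simp) (by simp)
    have hfZ : ∀ i, f i ⊆ W \ S := fun i => (hf i).2.1.trans hZ
    exact ⟨f, fun i => ⟨(hfZ i).trans Finset.sdiff_subset, hsing _ (hfZ i) (hf i).1⟩, hd⟩

/-! ### Extensions of `(m-1)`-sets by the last points -/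

lemma card_insert_empty_singletons (T : Finset ℕ) :
    (insert ∅ (T.image (fun x => ({x} : Finset ℕ)))).card = T.card + 1 := by
  rw [Finset.card_insert_of_notMem, Finset.card_image_of_injective]
  · exact Finset.singleton_injective
  · simp

/-- Splits off the possible element beyond `u`, or an arbitrary one if there is none. -/
lemma exists_insert_of_sdiff_card_le {C : Finset ℕ} {r t u : ℕ} (hC : C.card = r + 1)
    (hCt : C ⊆ ground t) (hCu : (C \ ground u).card ≤ 1) :
    ∃ A a, C = insert a A ∧ A.card = r ∧ A ⊆ ground u ∧ a ∉ A ∧ a ∈ ground t := by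
  have key : ∀ a ∈ C, C \ ground u ⊆ {a} →
      ∃ A a, C = insert a A ∧ A.card = r ∧ A ⊆ ground u ∧ a ∉ A ∧ a ∈ ground t := by
    intro a ha h
    refine ⟨C.erase a, a, (Finset.insert_erase ha).symm, by rw [Finset.card_erase_of_mem ha]; omega,
      ?_, Finset.notMem_erase _ _, hCt ha⟩
    intro x hx
    obtain ⟨h1, h2⟩ := Finset.mem_erase.1 hx
    by_contra h3
    exact h1 (Finset.mem_singleton.1 (h (Finset.mem_sdiff.2 ⟨h2, h3⟩)))
  rcases Finset.eq_empty_or_nonempty (C \ ground u) with h | ⟨a, ha⟩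
  · obtain ⟨a, ha⟩ : C.Nonempty := Finset.card_pos.1 (by omega)
    exact key a ha (by rw [h]; simp)
  · refine key a (Finset.mem_sdiff.1 ha).1 ?_
    intro x hx
    exact Finset.mem_singleton.2 (Finset.card_le_one.1 hCu x hx a ha)

/-- If few sets are missing, an `(r+1)`-set inside `[n-K]` with at most one element among the
last `2L` is present: otherwise all its shifts `B ∪ {z}` would be missing, with `B` an `r`-subset
of `(n-2L, n-L]` and `z` one of the last `K` points. -/
lemma dense_layer {G : Finset (Finset ℕ)} {r n K L : ℕ} (hEl : ElShift G)
    (hD : ((ground n).powerset \ G).card < K * L.choose r) (hKL : K ≤ L) (hL : 2 * L ≤ n)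
    {C : Finset ℕ} (hC : C ⊆ ground (n - K)) (hCr : C.card = r + 1)
    (hCu : (C \ ground (n - 2 * L)).card ≤ 1) : C ∈ G := by
  obtain ⟨A, a, rfl, hA, hAu, haA, ha⟩ := exists_insert_of_sdiff_card_le hCr hC hCu
  -- all `B ∪ {z}` with `B` in the window `(n-2L, n-L]` and `z` among the last `K` points go missing
  by_contra hcon
  have hsum := sum_card_le_of_union (Finset.Ioc (n - 2 * L) (n - L)) (Finset.Ioc (n - K) n)
    (by
      rw [Finset.disjoint_left]
      intro x hx hx'
      rw [Finset.mem_Ioc] at hx hx'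
      omega)
    ((Finset.Ioc (n - 2 * L) (n - L)).powersetCard r)
    (fun A hA => (Finset.mem_powersetCard.1 hA).1)
    (fun _ => (Finset.Ioc (n - K) n).image (fun z => {z}))
    (by
      intro A _ B hB
      obtain ⟨z, hz, rfl⟩ := Finset.mem_image.1 hB
      simpa using hz)
    ((ground n).powerset \ G)
    (by
      intro B hB Z hZ
      obtain ⟨z, hz, rfl⟩ := Finset.mem_image.1 hZ
      obtain ⟨hB1, hB2⟩ := Finset.mem_powersetCard.1 hB
      have hz' := Finset.mem_Ioc.1 hz
      have ha' := mem_ground.1 ha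
      refine Finset.mem_sdiff.2 ⟨Finset.mem_powerset.2 ?_, fun h => hcon ?_⟩
      · intro x hx
        rcases Finset.mem_union.1 hx with hx | hx
        · have := Finset.mem_Ioc.1 (hB1 hx)
          exact mem_ground.2 (by omega)
        · rw [Finset.mem_singleton.1 hx]
          exact mem_ground.2 (by omega)
      · rw [Finset.union_comm, ← Finset.insert_eq] at h
        exact hEl.block_insert hA hB2 hAu hB1 (by omega) (by omega) ha'.1 (by omega) haA h)
  rw [Finset.sum_const, Finset.card_powersetCard, Finset.card_image_of_injective _
    Finset.singleton_injective, Nat.card_Ioc, Nat.card_Ioc, smul_eq_mul,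
    show n - L - (n - 2 * L) = L by omega, show n - (n - K) = K by omega, mul_comm] at hsum
  omega

/-- Disjoint `r`-sets `f i` in `[n-K]`, extended by disjoint parts `g i` of the last `K = k + c`
points, are completed to `s` disjoint sets by splitting the rest of `[n-K]` into `(r+1)`-sets. -/
lemma no_extension {G : Finset (Finset ℕ)} {r c s n K L k : ℕ} (hn : n = (r + 1) * s + c)
    (hk : k + c = K) (hL : 2 * L + k ≤ s) (hNo : NoMatch G s)
    (hdense : ∀ C ⊆ ground (n - K), C.card = r + 1 → (C \ ground (n - 2 * L)).card ≤ 1 → C ∈ G)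
    (f g : Fin k → Finset ℕ) (hf : ∀ i, f i ∈ (ground (n - K)).powersetCard r)
    (hdf : Pairwise (fun i j => Disjoint (f i) (f j))) (hg : ∀ i, g i ⊆ Finset.Ioc (n - K) n)
    (hdg : Pairwise (fun i j => Disjoint (g i) (g j))) (hfg : ∀ i, f i ∪ g i ∈ G) : False := by
  have hf' := fun i => Finset.mem_powersetCard.1 (hf i)
  obtain ⟨q, rfl⟩ : ∃ q, s = k + q := ⟨s - k, by omega⟩
  set Z := Finset.univ.biUnion f with hZ
  have hZc : Z.card = k * r := by
    rw [hZ, Finset.card_biUnion (fun i _ j _ hij => hdf hij), Finset.sum_congr rfl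
      (fun i _ => (hf' i).2)]
    simp
  have hZs : Z ⊆ ground (n - K) := Finset.biUnion_subset.2 fun i _ => (hf' i).1
  have hRc : (ground (n - K) \ Z).card = (r + 1) * q := by
    rw [Finset.card_sdiff_of_subset hZs, card_ground, hZc, hn, ← hk]
    have : (r + 1) * (k + q) + c = (r + 1) * q + k * r + (k + c) := by ring
    omega
  have hHc : ((ground (n - K) \ Z) \ ground (n - 2 * L)).card ≤ q := by
    have h1 : (ground (n - K) \ Z) \ ground (n - 2 * L) ⊆ Finset.Ioc (n - 2 * L) n := by
      intro x hx
      simp only [Finset.mem_sdiff, mem_ground] at hx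
      rw [Finset.mem_Ioc]
      omega
    have := Finset.card_le_card h1
    rw [Nat.card_Ioc] at this
    omega
  obtain ⟨h, hh, hdh⟩ := partition_lemma (r + 1) q _ _ hRc Finset.sdiff_subset hHc
  have hhG : ∀ i, h i ∈ G := by
    intro i
    refine hdense _ ((hh i).2.1.trans Finset.sdiff_subset) (hh i).1 ?_
    refine le_trans (Finset.card_le_card ?_) (hh i).2.2
    intro x hx
    obtain ⟨h1, h2⟩ := Finset.mem_sdiff.1 hx
    exact Finset.mem_inter.2 ⟨h1, Finset.mem_sdiff.2 ⟨(hh i).2.1 h1, h2⟩⟩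
  have hEW : ∀ A B : Finset ℕ, A ⊆ ground (n - K) → B ⊆ Finset.Ioc (n - K) n → Disjoint A B := by
    intro A B hA hB
    rw [Finset.disjoint_left]
    intro x h1 h2
    have := mem_ground.1 (hA h1)
    have := Finset.mem_Ioc.1 (hB h2)
    omega
  have hhs : ∀ i, h i ⊆ ground (n - K) := fun i => (hh i).2.1.trans Finset.sdiff_subset
  have hfh : ∀ i j, Disjoint (f i) (h j) := fun i j =>
    Finset.disjoint_of_subset_left (Finset.subset_biUnion_of_mem f (Finset.mem_univ i))
      (Finset.disjoint_of_subset_right (hh j).2.1 Finset.disjoint_sdiff)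
  have hmix : ∀ i j, Disjoint (f i ∪ g i) (h j) := fun i j =>
    Finset.disjoint_union_left.2 ⟨hfh i j, (hEW _ _ (hhs j) (hg i)).symm⟩
  refine hNo (Fin k ⊕ Fin q) (by simp) (Sum.elim (fun i => f i ∪ g i) h) ?_ ?_
  · rintro (i | i)
    · exact hfg i
    · exact hhG i
  · rintro (i | i) (j | j) hij
    · have hij : i ≠ j := fun e => hij (by rw [e])
      simp only [Sum.elim_inl]
      rw [Finset.disjoint_union_left, Finset.disjoint_union_right, Finset.disjoint_union_right]
      exact ⟨⟨hdf hij, hEW _ _ (hf' i).1 (hg j)⟩, (hEW _ _ (hf' j).1 (hg i)).symm, hdg hij⟩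
    · exact hmix i j
    · exact (hmix j i).symm
    · exact hdh (fun e => hij (by rw [e]))

/-- The missing extensions of `A` by subsets of the last `K` points. -/
def tailMissing (G : Finset (Finset ℕ)) (n K : ℕ) (A : Finset ℕ) : Finset (Finset ℕ) :=
  (Finset.Ioc (n - K) n).powerset.filter (fun B => A ∪ B ∉ G)

lemma mem_tailMissing {G : Finset (Finset ℕ)} {n K : ℕ} {A B : Finset ℕ} :
    B ∈ tailMissing G n K A ↔ B ⊆ Finset.Ioc (n - K) n ∧ A ∪ B ∉ G := by
  simp [tailMissing]

/-- `A` behaves as in the extremal family: no one-point extension of `A` by one of the last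
`2c + 1` points is present. -/
def Std (G : Finset (Finset ℕ)) (n c : ℕ) (A : Finset ℕ) : Prop :=
  ∀ x ∈ Finset.Ioc (n - (2 * c + 1)) n, insert x A ∉ G

lemma tailMissing_down {G : Finset (Finset ℕ)} {n K : ℕ}
    (hUp : ∀ X ∈ G, ∀ Y ⊆ ground n, X ⊆ Y → Y ∈ G) {A : Finset ℕ} (hA : A ⊆ ground n) :
    ∀ B ∈ tailMissing G n K A, ∀ B' ⊆ B, B' ∈ tailMissing G n K A := by
  intro B hB B' hB'
  obtain ⟨h1, h2⟩ := mem_tailMissing.1 hB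
  refine mem_tailMissing.2 ⟨hB'.trans h1, fun h => h2 ?_⟩
  refine hUp _ h _ (Finset.union_subset hA ?_) (Finset.union_subset_union_right hB')
  intro x hx
  have := Finset.mem_Ioc.1 (h1 hx)
  exact mem_ground.2 (by omega)

/-- By shiftedness the missing singleton extensions form a final segment, so if there are `2c + 1`
of them, they are those by the last `2c + 1` points. -/
lemma std_of_card {G : Finset (Finset ℕ)} {n K c : ℕ} (hEl : ElShift G) {A : Finset ℕ}
    (hA : A ⊆ ground (n - K))
    (h : ((Finset.Ioc (n - K) n).filter (fun x => {x} ∈ tailMissing G n K A)).card = 2 * c + 1) :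
    Std G n c A := by
  have hAn : ∀ x ∈ A, x ≤ n - K := fun x hx => (mem_ground.1 (hA hx)).2
  intro x hx hxG
  rw [Finset.mem_Ioc] at hx
  have hsub : (Finset.Ioc (n - K) n).filter (fun x => {x} ∈ tailMissing G n K A) ⊆
      Finset.Ioc x n := by
    intro y hy
    obtain ⟨h1, h2⟩ := Finset.mem_filter.1 hy
    rw [Finset.mem_Ioc] at h1 ⊢
    refine ⟨?_, h1.2⟩
    by_contra hyx
    have h3 := (mem_tailMissing.1 h2).2
    rw [Finset.union_comm, ← Finset.insert_eq] at h3
    rcases Nat.lt_or_ge y x with hlt | hge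
    · have hxA : x ∉ A := fun h => by have := hAn x h; omega
      have hyA : y ∉ A := fun h => by have := hAn y h; omega
      have := hEl _ hxG x (Finset.mem_insert_self _ _) y (by omega) hlt
        (by simp only [Finset.mem_insert, not_or]; exact ⟨by omega, hyA⟩)
      rw [Finset.erase_insert hxA] at this
      exact h3 this
    · have : y = x := by omega
      rw [this] at h3
      exact h3 hxG
  have := Finset.card_le_card hsub
  rw [h, Nat.card_Ioc] at this
  omega

open Classical in
/-- Sets `A` that are not standard but have at most `2c + 2` missing extensions are rare: `k`
disjoint ones with the same missing extensions would yield `s` disjoint members. -/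
lemma bad_bound {G : Finset (Finset ℕ)} {r c s n K L k : ℕ} (hn : n = (r + 1) * s + c)
    (hk : k + c = K) (hL : 2 * L + k ≤ s) (hc : 2 ≤ c) (hKn : K ≤ n)
    (hEl : ElShift G) (hUp : ∀ X ∈ G, ∀ Y ⊆ ground n, X ⊆ Y → Y ∈ G) (hNo : NoMatch G s)
    (hdense : ∀ C ⊆ ground (n - K), C.card = r + 1 → (C \ ground (n - 2 * L)).card ≤ 1 → C ∈ G) :
    (((ground (n - K)).powersetCard r).filter
      (fun A => ¬ Std G n c A ∧ (tailMissing G n K A).card ≤ 2 * c + 2)).card * n ≤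
      2 ^ 2 ^ K * (k * r * n ^ r) := by
  set bad := ((ground (n - K)).powersetCard r).filter
      (fun A => ¬ Std G n c A ∧ (tailMissing G n K A).card ≤ 2 * c + 2) with hbad
  -- the bad sets are grouped by their family `U` of missing extensions
  have hfib : ∀ U : Finset (Finset ℕ),
      (bad.filter (fun A => tailMissing G n K A = U)).card * n ≤ k * r * n ^ r := by
    intro U
    by_contra hcon
    push Not at hcon
    have hsub : bad.filter (fun A => tailMissing G n K A = U) ⊆ (ground (n - K)).powersetCard r :=
      (Finset.filter_subset _ _).trans (Finset.filter_subset _ _)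
    obtain ⟨f, hf, hdf⟩ := greedy (ground (n - K)) r n (by rw [card_ground]; omega) _ hsub k hcon
    obtain ⟨A, hA⟩ : (bad.filter (fun A => tailMissing G n K A = U)).Nonempty := by
      rw [Finset.nonempty_iff_ne_empty]
      intro h
      rw [h] at hcon
      simp at hcon
    obtain ⟨hA1, hAU⟩ := Finset.mem_filter.1 hA
    obtain ⟨hA2, hA3, hA4⟩ := Finset.mem_filter.1 hA1
    have hAs := (Finset.mem_powersetCard.1 hA2).1
    obtain ⟨g, hg, hdg⟩ := small_downset c k hc (Finset.Ioc (n - K) n)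
      (by rw [Nat.card_Ioc]; omega) U
      (by rw [← hAU]; exact tailMissing_down hUp (hAs.trans (ground_mono (by omega))))
      (by rw [← hAU]; exact hA4)
      (by
        intro _ h
        rw [← hAU] at h
        exact hA3 (std_of_card hEl hAs h))
    refine no_extension hn hk hL hNo hdense f g (fun i => hsub (hf i)) hdf (fun i => (hg i).1) hdg ?_
    intro i
    have h1 := (Finset.mem_filter.1 (hf i)).2
    have h2 := (hg i).2
    rw [← h1, mem_tailMissing] at h2
    by_contra h3
    exact h2 ⟨(hg i).1, h3⟩
  rw [Finset.card_eq_sum_card_fiberwise (f := tailMissing G n K)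
    (t := (Finset.Ioc (n - K) n).powerset.powerset) (fun A _ =>
      Finset.mem_coe.2 (Finset.mem_powerset.2 (fun B hB =>
        Finset.mem_powerset.2 (mem_tailMissing.1 hB).1))), Finset.sum_mul]
  refine (Finset.sum_le_card_nsmul _ _ _ (fun U _ => hfib U)).trans ?_
  rw [smul_eq_mul, Finset.card_powerset, Finset.card_powerset, Nat.card_Ioc,
    show n - (n - K) = K by omega]

/-! ### The family `Q` and stability -/

lemma mem_Qfam {m s c : ℕ} {P : Finset ℕ} :
    P ∈ Qfam m s c ↔ P ⊆ ground (m * s + c) ∧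
      2 * m ≤ P.card + (P ∩ ground (m * s - c - 1)).card := by
  simp [Qfam]

lemma Qfam_up {m s c : ℕ} {P R : Finset ℕ} (hP : P ∈ Qfam m s c) (hPR : P ⊆ R)
    (hR : R ⊆ ground (m * s + c)) : R ∈ Qfam m s c := by
  have := (mem_Qfam.1 hP).2
  refine mem_Qfam.2 ⟨hR, this.trans ?_⟩
  exact Nat.add_le_add (Finset.card_le_card hPR)
    (Finset.card_le_card (Finset.inter_subset_inter_right hPR))

lemma union_split {P : Finset ℕ} {N n : ℕ} (hP : P ⊆ ground n) :
    P = (P ∩ ground N) ∪ (P ∩ Finset.Ioc N n) := by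
  ext x
  simp only [Finset.mem_union, Finset.mem_inter, mem_ground, Finset.mem_Ioc]
  constructor
  · intro h
    have := mem_ground.1 (hP h)
    by_cases hx : x ≤ N
    · exact Or.inl ⟨h, this.1, hx⟩
    · exact Or.inr ⟨h, by omega, this.2⟩
  · rintro (h | h) <;> exact h.1

lemma disj_ground_Ioc {A B : Finset ℕ} {t N n : ℕ} (htN : t ≤ N) (hA : A ⊆ ground t)
    (hB : B ⊆ Finset.Ioc N n) : Disjoint A B := by
  rw [Finset.disjoint_left]
  intro x h1 h2
  have := mem_ground.1 (hA h1)
  have := Finset.mem_Ioc.1 (hB h2)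
  omega

lemma card_split {P : Finset ℕ} {N n : ℕ} (hP : P ⊆ ground n) :
    P.card = (P ∩ ground N).card + (P ∩ Finset.Ioc N n).card := by
  conv_lhs => rw [union_split (N := N) hP]
  exact Finset.card_union_of_disjoint
    (disj_ground_Ioc le_rfl Finset.inter_subset_right Finset.inter_subset_right)

/-- The complement of `Q` has at most `(2c+2) C(N, m-1)` members, up to lower-order terms. -/
lemma Qfam_compl_bound {r s c n N : ℕ} (hn : n = (r + 1) * s + c) (hN : N = (r + 1) * s - c - 1)
    (hpos : c + 1 ≤ (r + 1) * s) :
    ∃ Err, ((ground n).powerset \ Qfam (r + 1) s c).card ≤ (2 * c + 2) * N.choose r + Err ∧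
      Err * n ≤ 2 ^ (2 * c + 1) * r * n ^ r := by
  set T := Finset.Ioc N n with hT
  have hTc : T.card = 2 * c + 1 := by rw [hT, Nat.card_Ioc]; omega
  set V : Finset (Finset ℕ) := insert ∅ (T.image (fun x => {x})) with hV
  have hVc : V.card = 2 * c + 2 := by rw [hV, card_insert_empty_singletons, hTc]
  set I : Finset (Finset ℕ) := (Finset.range r).biUnion (fun a => (ground N).powersetCard a) with hI
  have hsub : (ground n).powerset \ Qfam (r + 1) s c ⊆
      ((ground N).powersetCard r ×ˢ V).image (fun p => p.1 ∪ p.2) ∪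
      (I ×ˢ T.powerset).image (fun p => p.1 ∪ p.2) := by
    intro P hP
    obtain ⟨hPn, hPQ⟩ := Finset.mem_sdiff.1 hP
    have hPn := Finset.mem_powerset.1 hPn
    have hw : P.card + (P ∩ ground N).card < 2 * (r + 1) := by
      by_contra h
      exact hPQ (mem_Qfam.2 ⟨by rw [← hn]; exact hPn, by rw [← hN]; omega⟩)
    have hsp : P.card = (P ∩ ground N).card + (P ∩ T).card := card_split hPn
    -- a set outside `Q` meets `[N]` in fewer than `r` points, or in `r` points and `T` in at most one
    rcases Nat.lt_or_ge (P ∩ ground N).card r with h | h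
    · refine Finset.mem_union_right _ (Finset.mem_image.2 ⟨(P ∩ ground N, P ∩ T), ?_,
        (union_split hPn).symm⟩)
      rw [Finset.mem_product, Finset.mem_powerset]
      exact ⟨Finset.mem_biUnion.2 ⟨_, Finset.mem_range.2 h, Finset.mem_powersetCard.2
        ⟨Finset.inter_subset_right, rfl⟩⟩, Finset.inter_subset_right⟩
    · refine Finset.mem_union_left _ (Finset.mem_image.2 ⟨(P ∩ ground N, P ∩ T), ?_,
        (union_split hPn).symm⟩)
      rw [Finset.mem_product]
      refine ⟨Finset.mem_powersetCard.2 ⟨Finset.inter_subset_right,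
        by show (P ∩ ground N).card = r; omega⟩, ?_⟩
      have h1 : (P ∩ T).card ≤ 1 := by omega
      rcases Finset.eq_empty_or_nonempty (P ∩ T) with h2 | ⟨x, hx⟩
      · simp only [h2]; exact Finset.mem_insert_self _ _
      · have h3 : P ∩ T = {x} := Finset.eq_singleton_iff_unique_mem.2
          ⟨hx, fun y hy => Finset.card_le_one.1 h1 y hy x hx⟩
        simp only [h3]
        exact Finset.mem_insert_of_mem (Finset.mem_image.2 ⟨x, (Finset.mem_inter.1 hx).2, rfl⟩)
  refine ⟨I.card * 2 ^ (2 * c + 1), ?_, ?_⟩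
  · refine (Finset.card_le_card hsub).trans ((Finset.card_union_le _ _).trans ?_)
    refine Nat.add_le_add (Finset.card_image_le.trans ?_) (Finset.card_image_le.trans ?_)
    · rw [Finset.card_product, Finset.card_powersetCard, card_ground, hVc, mul_comm]
    · rw [Finset.card_product, Finset.card_powerset, hTc]
  · have hI1 : I.card * n ≤ r * n ^ r := by
      have h1 : I.card ≤ ∑ a ∈ Finset.range r, N.choose a := by
        refine Finset.card_biUnion_le.trans (Finset.sum_le_sum fun a _ => ?_)
        rw [Finset.card_powersetCard, card_ground]
      refine (Nat.mul_le_mul_right n h1).trans ?_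
      rw [Finset.sum_mul]
      refine (Finset.sum_le_card_nsmul _ _ (n ^ r) ?_).trans (by simp)
      intro a ha
      have ha := Finset.mem_range.1 ha
      calc N.choose a * n ≤ n ^ a * n :=
            Nat.mul_le_mul_right _ ((Nat.choose_le_pow _ _).trans
              (Nat.pow_le_pow_left (by omega) _))
        _ = n ^ (a + 1) := (pow_succ _ _).symm
        _ ≤ n ^ r := Nat.pow_le_pow_right (by omega) ha
    calc I.card * 2 ^ (2 * c + 1) * n = 2 ^ (2 * c + 1) * (I.card * n) := by ring
      _ ≤ 2 ^ (2 * c + 1) * (r * n ^ r) := Nat.mul_le_mul_left _ hI1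
      _ = _ := by ring

/-- The constant in the stability estimate `stability`; only its independence of `s` matters. -/
def stabConst (r c K k : ℕ) : ℕ :=
  ((2 * c + 2) * K + 2 ^ (2 * c + 1) * r) +
    (2 * c + 2) * (((2 * c + 2) * K + 2 ^ (2 * c + 1) * r) + (2 * c + 3) * (2 ^ 2 ^ K * (k * r)))

open Classical in
/-- Stability: if `G` misses at most as many sets as `Q`, it misses only `O(n^(m-2))` members of
`Q`. All but `O(n^(m-2))` of the `(m-1)`-sets `A` have at least `2c + 2` missing extensions, with
equality only for the standard ones, and the total number of missing sets leaves no room for many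
non-standard `A`. -/
lemma stability {G : Finset (Finset ℕ)} {r c s n K L k : ℕ} (hn : n = (r + 1) * s + c)
    (hpos : c + 1 ≤ (r + 1) * s)
    (hk : k + c = K) (hL : 2 * L + k ≤ s) (hc : 2 ≤ c) (hK : 2 * c + 1 ≤ K) (hKn : K ≤ n)
    (hEl : ElShift G) (hUp : ∀ X ∈ G, ∀ Y ⊆ ground n, X ⊆ Y → Y ∈ G) (hNo : NoMatch G s)
    (hdense : ∀ C ⊆ ground (n - K), C.card = r + 1 → (C \ ground (n - 2 * L)).card ≤ 1 → C ∈ G)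
    (hD : ((ground n).powerset \ G).card ≤ ((ground n).powerset \ Qfam (r + 1) s c).card) :
    (Qfam (r + 1) s c \ G).card * n ≤ stabConst r c K k * n ^ r := by
  obtain ⟨N, hN⟩ : ∃ N, N = (r + 1) * s - c - 1 := ⟨_, rfl⟩
  have hNn : N = n - (2 * c + 1) := by omega
  have hNK : n - K ≤ N := by omega
  obtain ⟨Err, hQ, hErr⟩ := Qfam_compl_bound hn hN hpos
  set D := (ground n).powerset \ G with hDdef
  set 𝒜 := (ground (n - K)).powersetCard r with h𝒜
  set bad := 𝒜.filter (fun A => ¬ Std G n c A ∧ (tailMissing G n K A).card ≤ 2 * c + 2) with hbaddef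
  have hbad : bad.card * n ≤ 2 ^ 2 ^ K * (k * r * n ^ r) :=
    bad_bound hn hk hL hc hKn hEl hUp hNo hdense
  set non := 𝒜.filter (fun A => ¬ Std G n c A) with hnon
  set T := Finset.Ioc N n with hT
  have hTc : T.card = 2 * c + 1 := by rw [hT, Nat.card_Ioc]; omega
  set V : Finset (Finset ℕ) := insert ∅ (T.image (fun x => {x})) with hV
  have hVc : V.card = 2 * c + 2 := by rw [hV, card_insert_empty_singletons, hTc]
  have hVT : ∀ B ∈ V, B ⊆ T ∧ B.card ≤ 1 := by
    intro B hB
    rcases Finset.mem_insert.1 hB with rfl | hB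
    · simp
    · obtain ⟨x, hx, rfl⟩ := Finset.mem_image.1 hB
      simpa using hx
  have h𝒜s : ∀ A ∈ 𝒜, A ⊆ ground (n - K) := fun A hA => (Finset.mem_powersetCard.1 hA).1
  have hground : ∀ A B : Finset ℕ, A ⊆ ground (n - K) → B ⊆ Finset.Ioc (n - K) n →
      A ∪ B ⊆ ground n := by
    intro A B hA hB
    refine Finset.union_subset (hA.trans (ground_mono (by omega))) ?_
    intro x hx
    have := Finset.mem_Ioc.1 (hB hx)
    exact mem_ground.2 (by omega)
  have hTK : T ⊆ Finset.Ioc (n - K) n := Finset.Ioc_subset_Ioc_left hNK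
  have hstdV : ∀ A ∈ 𝒜, Std G n c A → ∀ B ∈ V, A ∪ B ∉ G := by
    intro A hA hStd B hB hG
    have hins : ∀ x ∈ T, insert x A ∉ G := by
      intro x hx
      exact hStd x (by rw [← hNn]; exact hx)
    rcases Finset.mem_insert.1 hB with rfl | hB
    · have hnT : n ∈ T := by rw [hT, Finset.mem_Ioc]; omega
      rw [Finset.union_empty] at hG
      refine hins n hnT (hUp _ hG _ ?_ (Finset.subset_insert _ _))
      rw [Finset.insert_eq, Finset.union_comm]
      exact hground A {n} (h𝒜s A hA) (by simpa using hTK hnT)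
    · obtain ⟨x, hx, rfl⟩ := Finset.mem_image.1 hB
      rw [Finset.union_comm, ← Finset.insert_eq] at hG
      exact hins x hx hG
  -- counting all missing sets of the form `A ∪ B`
  have hsum1 : ∑ A ∈ 𝒜, (tailMissing G n K A).card ≤ D.card := by
    refine sum_card_le_of_union (ground (n - K)) (Finset.Ioc (n - K) n)
      (disj_ground_Ioc le_rfl le_rfl le_rfl) 𝒜 h𝒜s _
      (fun A _ B hB => (mem_tailMissing.1 hB).1) D ?_
    intro A hA B hB
    obtain ⟨h1, h2⟩ := mem_tailMissing.1 hB
    exact Finset.mem_sdiff.2 ⟨Finset.mem_powerset.2 (hground A B (h𝒜s A hA) h1), h2⟩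
  have hpt : ∀ A ∈ 𝒜, (2 * c + 2) + (if ¬ Std G n c A then 1 else 0) ≤
      (tailMissing G n K A).card + (2 * c + 3) *
        (if ¬ Std G n c A ∧ (tailMissing G n K A).card ≤ 2 * c + 2 then 1 else 0) := by
    intro A hA
    by_cases hStd : Std G n c A
    · have hVU : V ⊆ tailMissing G n K A := fun B hB =>
        mem_tailMissing.2 ⟨(hVT B hB).1.trans hTK, hstdV A hA hStd B hB⟩
      have := Finset.card_le_card hVU
      simp only [hStd, not_true_eq_false, if_false, false_and]
      omega
    · by_cases h2 : (tailMissing G n K A).card ≤ 2 * c + 2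
      · simp only [hStd, h2, not_false_eq_true, if_true, and_self]; omega
      · simp only [hStd, h2, not_false_eq_true, if_true, and_false, if_false]; omega
  have hsum2 : 𝒜.card * (2 * c + 2) + non.card ≤
      ∑ A ∈ 𝒜, (tailMissing G n K A).card + (2 * c + 3) * bad.card := calc
    _ = ∑ A ∈ 𝒜, ((2 * c + 2) + (if ¬ Std G n c A then 1 else 0)) := by
      rw [Finset.sum_add_distrib (f := fun _ => 2 * c + 2), Finset.sum_const, smul_eq_mul, hnon,
        Finset.card_filter]
    _ ≤ _ := Finset.sum_le_sum hpt
    _ = _ := by rw [Finset.sum_add_distrib, ← Finset.mul_sum, hbaddef, Finset.card_filter]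
  -- the missing sets outside `Q`
  have hsum3 : (𝒜.filter (fun A => Std G n c A)).card * (2 * c + 2) ≤
      (D \ Qfam (r + 1) s c).card := by
    have := sum_card_le_of_union (ground (n - K)) (Finset.Ioc (n - K) n)
      (disj_ground_Ioc le_rfl le_rfl le_rfl) (𝒜.filter (fun A => Std G n c A))
      (fun A hA => h𝒜s A (Finset.mem_filter.1 hA).1) (fun _ => V)
      (fun A _ B hB => (hVT B hB).1.trans hTK) (D \ Qfam (r + 1) s c) (by
        intro A hA B hB
        obtain ⟨hA1, hA2⟩ := Finset.mem_filter.1 hA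
        have hAs := h𝒜s A hA1
        have hAc := (Finset.mem_powersetCard.1 hA1).2
        refine Finset.mem_sdiff.2 ⟨Finset.mem_sdiff.2 ⟨Finset.mem_powerset.2
          (hground A B hAs ((hVT B hB).1.trans hTK)), hstdV A hA1 hA2 B hB⟩, ?_⟩
        intro hQ
        have h1 := (mem_Qfam.1 hQ).2
        rw [← hN] at h1
        have h2 : (A ∪ B) ∩ ground N ⊆ A := by
          intro x hx
          obtain ⟨h3, h4⟩ := Finset.mem_inter.1 hx
          rcases Finset.mem_union.1 h3 with h | h
          · exact h
          · have := Finset.mem_Ioc.1 ((hVT B hB).1 h)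
            have := mem_ground.1 h4
            omega
        have h3 := Finset.card_le_card h2
        have h4 := Finset.card_union_le A B
        have h5 := (hVT B hB).2
        omega)
    simpa [hVc] using this
  have hsplit : (𝒜.filter (fun A => Std G n c A)).card + non.card = 𝒜.card :=
    Finset.card_filter_add_card_filter_not _
  have hQD : Qfam (r + 1) s c \ G ⊆ D ∩ Qfam (r + 1) s c := by
    intro P hP
    obtain ⟨h1, h2⟩ := Finset.mem_sdiff.1 hP
    refine Finset.mem_inter.2 ⟨Finset.mem_sdiff.2 ⟨Finset.mem_powerset.2 ?_, h2⟩, h1⟩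
    rw [hn]; exact (mem_Qfam.1 h1).1
  have hQDc := Finset.card_le_card hQD
  have hDs := Finset.card_sdiff_add_card_inter D (Qfam (r + 1) s c)
  -- comparing `C(N, r)` with the number of sets avoiding the last `K` points
  set tch := ((ground N).powersetCard r).filter (fun A => ¬ Disjoint A (Finset.Ioc (n - K) n))
    with htch
  have htb : tch.card * n ≤ K * n ^ r := by
    have := touching_bound (ground N) (Finset.Ioc (n - K) n) r n (by rw [card_ground]; omega)
    rwa [Nat.card_Ioc, show n - (n - K) = K by omega] at this
  have hch : N.choose r ≤ 𝒜.card + tch.card := by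
    have h1 : (ground N).powersetCard r ⊆ 𝒜 ∪ tch := by
      intro A hA
      by_cases hd : Disjoint A (Finset.Ioc (n - K) n)
      · obtain ⟨h1, h2⟩ := Finset.mem_powersetCard.1 hA
        refine Finset.mem_union_left _ (Finset.mem_powersetCard.2 ⟨fun x hx => ?_, h2⟩)
        have h3 := mem_ground.1 (h1 hx)
        have h4 := Finset.disjoint_left.1 hd hx
        rw [Finset.mem_Ioc] at h4
        exact mem_ground.2 (by omega)
      · exact Finset.mem_union_right _ (Finset.mem_filter.2 ⟨hA, hd⟩)
    have := (Finset.card_le_card h1).trans (Finset.card_union_le _ _)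
    rwa [Finset.card_powersetCard, card_ground] at this
  have hE1 : D.card ≤ (2 * c + 2) * 𝒜.card + ((2 * c + 2) * tch.card + Err) := by
    have := Nat.mul_le_mul_left (2 * c + 2) hch
    rw [Nat.mul_add] at this
    omega
  have hnonle : non.card ≤ ((2 * c + 2) * tch.card + Err) + (2 * c + 3) * bad.card := by
    have : 𝒜.card * (2 * c + 2) = (2 * c + 2) * 𝒜.card := mul_comm _ _
    omega
  have hfin : (Qfam (r + 1) s c \ G).card ≤ ((2 * c + 2) * tch.card + Err) +
      (2 * c + 2) * non.card := by
    have h1 : (2 * c + 2) * 𝒜.card = (𝒜.filter (fun A => Std G n c A)).card * (2 * c + 2) +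
        (2 * c + 2) * non.card := by rw [← hsplit]; ring
    omega
  have hE1n : ((2 * c + 2) * tch.card + Err) * n ≤
      ((2 * c + 2) * K + 2 ^ (2 * c + 1) * r) * n ^ r := by
    have := Nat.mul_le_mul_left (2 * c + 2) htb
    calc _ = (2 * c + 2) * (tch.card * n) + Err * n := by ring
      _ ≤ (2 * c + 2) * (K * n ^ r) + 2 ^ (2 * c + 1) * r * n ^ r := Nat.add_le_add this hErr
      _ = _ := by ring
  calc (Qfam (r + 1) s c \ G).card * n
      ≤ (((2 * c + 2) * tch.card + Err) + (2 * c + 2) *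
        (((2 * c + 2) * tch.card + Err) + (2 * c + 3) * bad.card)) * n :=
        Nat.mul_le_mul_right _ (hfin.trans (Nat.add_le_add_left (Nat.mul_le_mul_left _ hnonle) _))
    _ = ((2 * c + 2) * tch.card + Err) * n + (2 * c + 2) *
        (((2 * c + 2) * tch.card + Err) * n + (2 * c + 3) * (bad.card * n)) := by ring
    _ ≤ ((2 * c + 2) * K + 2 ^ (2 * c + 1) * r) * n ^ r + (2 * c + 2) *
        (((2 * c + 2) * K + 2 ^ (2 * c + 1) * r) * n ^ r +
          (2 * c + 3) * (2 ^ 2 ^ K * (k * r * n ^ r))) := by gcongr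
    _ = stabConst r c K k * n ^ r := by rw [stabConst]; ring

/-! ### Completing a set outside `Q` to a matching -/

/-- The two kinds of sets used to complete a matching: an `(r+1)`-set in `[N]` with at most one
element beyond `u`, or an `r`-set in `[u]` together with two of the last points `N+1, …, n`. -/
def IsFill (r u N n : ℕ) (C : Finset ℕ) : Prop :=
  (C.card = r + 1 ∧ C ⊆ ground N ∧ (C \ ground u).card ≤ 1) ∨
    ∃ A B, C = A ∪ B ∧ A.card = r ∧ A ⊆ ground u ∧ B.card = 2 ∧ B ⊆ Finset.Ioc N n

lemma IsFill.mem_Qfam {r c s n N u : ℕ} (hn : n = (r + 1) * s + c) (hN : N + (2 * c + 1) = n)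
    (hu : u ≤ N) {C : Finset ℕ} (h : IsFill r u N n C) : C ∈ Qfam (r + 1) s c := by
  have hN' : (r + 1) * s - c - 1 = N := by omega
  refine _root_.mem_Qfam.2 ?_
  rw [← hn, hN']
  rcases h with ⟨h1, h2, -⟩ | ⟨A, B, rfl, hA, hAu, hB, hBT⟩
  · refine ⟨h2.trans (ground_mono (by omega)), ?_⟩
    rw [Finset.inter_eq_left.2 h2]
    omega
  · have hAN : A ⊆ ground N := hAu.trans (ground_mono hu)
    have hd : Disjoint A B := disj_ground_Ioc le_rfl hAN hBT
    refine ⟨Finset.union_subset (hAN.trans (ground_mono (by omega))) fun x hx => ?_, ?_⟩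
    · have := Finset.mem_Ioc.1 (hBT hx)
      exact mem_ground.2 (by omega)
    · have h1 : A.card ≤ ((A ∪ B) ∩ ground N).card :=
        Finset.card_le_card (Finset.subset_inter Finset.subset_union_left hAN)
      rw [Finset.card_union_of_disjoint hd]
      omega

/-- A set `Y` of weight `2m - 1`, just below the threshold of `Q`, is completed to `s` disjoint
sets by `s - 1` members of `Q`: the weights of the `s` sets then exhaust the weight of `[n]`. -/
lemma fill {r c s n N u L : ℕ} (hn : n = (r + 1) * s + c) (hN : N + (2 * c + 1) = n)
    (hu : u + 2 * L = n) (hLc : 2 * c + 1 ≤ 2 * L) (hL : 2 * L + c + 1 ≤ s) {Y : Finset ℕ}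
    (hroom : Y.card + c * r ≤ u)
    (hYw : 2 * (Y ∩ ground N).card + (Y ∩ Finset.Ioc N n).card = 2 * r + 1) :
    ∃ p q, p + q + 1 = s ∧ ∃ X : Fin p ⊕ Fin q → Finset ℕ,
      Pairwise (fun i j => Disjoint (X i) (X j)) ∧
      ∀ i, IsFill r u N n (X i) ∧ Disjoint (X i) Y := by
  set T := Finset.Ioc N n with hT
  have hTc : T.card = 2 * c + 1 := by rw [hT, Nat.card_Ioc]; omega
  obtain ⟨j, hj⟩ : ∃ j, (Y ∩ T).card = 2 * j + 1 := ⟨((Y ∩ T).card - 1) / 2, by omega⟩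
  have hYT : (Y ∩ T).card ≤ 2 * c + 1 := hTc ▸ Finset.card_le_card Finset.inter_subset_right
  obtain ⟨p, hp⟩ : ∃ p, p + j = c := ⟨c - j, by omega⟩
  obtain ⟨q, hq⟩ : ∃ q, p + q + 1 = s := ⟨s - 1 - p, by omega⟩
  have hT' : (T \ Y).card = 2 * p := by
    have := Finset.card_sdiff_add_card_inter T Y
    rw [Finset.inter_comm] at this
    omega
  have hpc : r * p ≤ c * r := by rw [mul_comm]; exact Nat.mul_le_mul_right _ (by omega)
  obtain ⟨Z, hZs, hZc⟩ : ∃ Z ⊆ ground u \ Y, Z.card = r * p := by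
    refine Finset.exists_subset_card_eq ?_
    have := Finset.le_card_sdiff Y (ground u)
    rw [card_ground] at this
    omega
  have huN : u ≤ N := by omega
  have hZN : Z ⊆ ground N \ Y := hZs.trans (Finset.sdiff_subset_sdiff (ground_mono huN) le_rfl)
  have hRc : ((ground N \ Y) \ Z).card = (r + 1) * q := by
    rw [Finset.card_sdiff_of_subset hZN, hZc]
    have h1 := Finset.card_sdiff_add_card_inter (ground N) Y
    rw [Finset.inter_comm, card_ground] at h1
    have h2 : (r + 1) * s = (r + 1) * q + r * p + p + r + 1 := by rw [← hq]; ring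
    omega
  have hHc : (((ground N \ Y) \ Z) \ ground u).card ≤ q := by
    have h1 : ((ground N \ Y) \ Z) \ ground u ⊆ Finset.Ioc u n := by
      intro x hx
      simp only [Finset.mem_sdiff, mem_ground] at hx
      rw [Finset.mem_Ioc]
      omega
    have := Finset.card_le_card h1
    rw [Nat.card_Ioc] at this
    omega
  obtain ⟨f, hf, hdf⟩ := partition_lemma r p Z ∅ hZc (Finset.empty_subset _) (by simp)
  obtain ⟨g, hg, hdg⟩ := partition_lemma 2 p (T \ Y) ∅ hT' (Finset.empty_subset _) (by simp)
  obtain ⟨h, hh, hdh⟩ := partition_lemma (r + 1) q _ _ hRc Finset.sdiff_subset hHc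
  have hfu : ∀ i, f i ⊆ ground u := fun i => ((hf i).2.1.trans hZs).trans Finset.sdiff_subset
  have hfN : ∀ i, f i ⊆ ground N := fun i => (hfu i).trans (ground_mono huN)
  have hgT : ∀ i, g i ⊆ T := fun i => (hg i).2.1.trans Finset.sdiff_subset
  have hhN : ∀ i, h i ⊆ ground N := fun i =>
    ((hh i).2.1.trans Finset.sdiff_subset).trans Finset.sdiff_subset
  have hfh : ∀ i l, Disjoint (f i) (h l) := fun i l =>
    Finset.disjoint_of_subset_left (hf i).2.1
      (Finset.disjoint_of_subset_right (hh l).2.1 Finset.disjoint_sdiff)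
  have hmix : ∀ i l, Disjoint (f i ∪ g i) (h l) := fun i l =>
    Finset.disjoint_union_left.2 ⟨hfh i l, (disj_ground_Ioc le_rfl (hhN l) (hgT i)).symm⟩
  refine ⟨p, q, hq, Sum.elim (fun i => f i ∪ g i) h, ?_, ?_⟩
  · rintro (i | i) (l | l) hil
    · have hil : i ≠ l := fun e => hil (by rw [e])
      simp only [Sum.elim_inl]
      rw [Finset.disjoint_union_left, Finset.disjoint_union_right, Finset.disjoint_union_right]
      exact ⟨⟨hdf hil, disj_ground_Ioc le_rfl (hfN i) (hgT l)⟩,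
        (disj_ground_Ioc le_rfl (hfN l) (hgT i)).symm, hdg hil⟩
    · exact hmix i l
    · exact (hmix l i).symm
    · exact hdh (fun e => hil (by rw [e]))
  · rintro (i | i)
    · refine ⟨Or.inr ⟨f i, g i, rfl, (hf i).1, hfu i, (hg i).1, hgT i⟩, ?_⟩
      exact Finset.disjoint_union_left.2
        ⟨Finset.disjoint_of_subset_left ((hf i).2.1.trans hZs) Finset.sdiff_disjoint,
          Finset.disjoint_of_subset_left (hg i).2.1 Finset.sdiff_disjoint⟩
    · refine ⟨Or.inl ⟨(hh i).1, hhN i, le_trans (Finset.card_le_card ?_) (hh i).2.2⟩, ?_⟩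
      · intro x hx
        obtain ⟨h1, h2⟩ := Finset.mem_sdiff.1 hx
        exact Finset.mem_inter.2 ⟨h1, Finset.mem_sdiff.2 ⟨(hh i).2.1 h1, h2⟩⟩
      · exact Finset.disjoint_of_subset_left ((hh i).2.1.trans Finset.sdiff_subset)
          Finset.sdiff_disjoint

/-- A set outside `Q` lies in a set of weight exactly `2m - 1`. -/
lemma extend_to_weight {r c s n N : ℕ} (hn : n = (r + 1) * s + c) (hN : N + (2 * c + 1) = n)
    (hrN : r + 1 ≤ N) {X : Finset ℕ} (hX : X ⊆ ground n) (hXQ : X ∉ Qfam (r + 1) s c) :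
    ∃ Y, X ⊆ Y ∧ Y ⊆ ground n ∧ 2 * (Y ∩ ground N).card + (Y ∩ Finset.Ioc N n).card = 2 * r + 1 := by
  set T := Finset.Ioc N n with hT
  have hTc : T.card = 2 * c + 1 := by rw [hT, Nat.card_Ioc]; omega
  have hTn : T ⊆ ground n := fun x hx => by
    have := Finset.mem_Ioc.1 hx
    exact mem_ground.2 (by omega)
  have hTN : Disjoint (ground N) T := disj_ground_Ioc le_rfl le_rfl le_rfl
  have hw : X.card + (X ∩ ground N).card < 2 * (r + 1) := by
    by_contra h
    refine hXQ (mem_Qfam.2 ⟨hn ▸ hX, ?_⟩)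
    rw [show (r + 1) * s - c - 1 = N by omega]
    omega
  have hs : X.card = (X ∩ ground N).card + (X ∩ T).card := card_split hX
  have hXT : (X ∩ T).card ≤ 2 * c + 1 := hTc ▸ Finset.card_le_card Finset.inter_subset_right
  -- make the number of elements beyond `N` odd
  obtain ⟨B, hXB, hBT, hBc⟩ : ∃ B, X ∩ T ⊆ B ∧ B ⊆ T ∧ B.card = 2 * ((X ∩ T).card / 2) + 1 := by
    refine Finset.exists_subsuperset_card_eq Finset.inter_subset_right ?_ ?_ <;> omega
  obtain ⟨A, hXA, hAN, hAc⟩ : ∃ A, X ∩ ground N ⊆ A ∧ A ⊆ ground N ∧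
      A.card = r - (X ∩ T).card / 2 := by
    refine Finset.exists_subsuperset_card_eq Finset.inter_subset_right ?_ ?_
    · omega
    · rw [card_ground]; omega
  have hAB : (A ∪ B) ∩ ground N = A := by
    rw [Finset.union_inter_distrib_right, Finset.inter_eq_left.2 hAN,
      Finset.disjoint_iff_inter_eq_empty.1 (Finset.disjoint_of_subset_left hBT hTN.symm),
      Finset.union_empty]
  have hAB' : (A ∪ B) ∩ T = B := by
    rw [Finset.union_inter_distrib_right, Finset.inter_eq_left.2 hBT,
      Finset.disjoint_iff_inter_eq_empty.1 (Finset.disjoint_of_subset_left hAN hTN),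
      Finset.empty_union]
  refine ⟨A ∪ B, ?_, Finset.union_subset (hAN.trans (ground_mono (by omega))) (hBT.trans hTn), ?_⟩
  · rw [union_split (N := N) hX]
    exact Finset.union_subset_union hXA hXB
  · rw [hAB, hAB', hAc, hBc]
    omega

/-- If fewer than `C(L, r)` members of `Q` are missing from a shifted family, all fill sets are
present: a missing fill set would force all `C(L, r)` sets obtained by moving its `r`-part into
the window `(u, v]` to be missing. -/
lemma fill_mem {G : Finset (Finset ℕ)} {r c s n N u v L : ℕ} (hn : n = (r + 1) * s + c)
    (hN : N + (2 * c + 1) = n) (hu : u + 2 * L = n) (hv : v + L = n) (hLc : 2 * c + 1 < L)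
    (hEl : ElShift G) (hmiss : (Qfam (r + 1) s c \ G).card < L.choose r) {C : Finset ℕ}
    (hC : IsFill r u N n C) : C ∈ G := by
  by_contra hcon
  have hwin : (Finset.Ioc u v).card = L := by rw [Nat.card_Ioc]; omega
  have hvN : v < N := by omega
  -- a fixed tail `W` whose combination with every `r`-subset of the window is missing
  have key : ∀ W : Finset ℕ, (∀ x ∈ W, v < x) →
      (∀ B ∈ (Finset.Ioc u v).powersetCard r, B ∪ W ∈ Qfam (r + 1) s c ∧ B ∪ W ∉ G) → False := by
    intro W hW h
    have := sum_card_le_of_union (Finset.Ioc u v) W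
      (by
        rw [Finset.disjoint_left]
        intro x hx hx'
        have := Finset.mem_Ioc.1 hx
        have := hW x hx'
        omega)
      ((Finset.Ioc u v).powersetCard r) (fun A hA => (Finset.mem_powersetCard.1 hA).1)
      (fun _ => {W}) (by simp) (Qfam (r + 1) s c \ G)
      (by
        intro A hA B hB
        rw [Finset.mem_singleton.1 hB]
        exact Finset.mem_sdiff.2 (h A hA))
    simp only [Finset.card_singleton, Finset.sum_const, Finset.card_powersetCard, hwin,
      smul_eq_mul, mul_one] at this
    omega
  have hBN : ∀ B : Finset ℕ, B ⊆ Finset.Ioc u v → B ⊆ ground N := by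
    intro B hB x hx
    have := Finset.mem_Ioc.1 (hB hx)
    exact mem_ground.2 (by omega)
  have hN' : (r + 1) * s - c - 1 = N := by omega
  rcases hC with ⟨h1, h2, h3⟩ | ⟨A, W, rfl, hA, hAu, hW, hWT⟩
  · obtain ⟨A, a, rfl, hA, hAu, haA, ha⟩ := exists_insert_of_sdiff_card_le h1 h2 h3
    have ha := mem_ground.1 ha
    refine key {N} (by simpa using hvN) fun B hB => ?_
    obtain ⟨hB1, hB2⟩ := Finset.mem_powersetCard.1 hB
    have hNB : N ∉ B := fun h => by
      have := Finset.mem_Ioc.1 (hB1 h)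
      omega
    rw [Finset.union_comm, ← Finset.insert_eq]
    have hs : insert N B ⊆ ground N := by
      refine Finset.insert_subset (mem_ground.2 (by omega)) (hBN B hB1)
    refine ⟨mem_Qfam.2 ⟨hs.trans (ground_mono (by omega)), ?_⟩, fun h => hcon ?_⟩
    · rw [hN', Finset.inter_eq_left.2 hs, Finset.card_insert_of_notMem hNB]
      omega
    · exact hEl.block_insert hA hB2 hAu hB1 (by omega) hvN ha.1 ha.2 haA h
  · have hWv : ∀ x ∈ W, v < x := fun x hx => by
      have := Finset.mem_Ioc.1 (hWT hx)
      omega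
    refine key W hWv fun B hB => ?_
    obtain ⟨hB1, hB2⟩ := Finset.mem_powersetCard.1 hB
    have hWB : Disjoint W B := (disj_ground_Ioc le_rfl (hBN B hB1) hWT).symm
    have hWA : Disjoint W A :=
      (disj_ground_Ioc le_rfl (hAu.trans (ground_mono (by omega))) hWT).symm
    refine ⟨mem_Qfam.2 ⟨?_, ?_⟩, fun h => hcon ?_⟩
    · rw [← hn]
      refine Finset.union_subset ((hBN B hB1).trans (ground_mono (by omega))) fun x hx => ?_
      have := Finset.mem_Ioc.1 (hWT hx)
      exact mem_ground.2 (by omega)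
    · have h1 : B.card ≤ ((B ∪ W) ∩ ground N).card :=
        Finset.card_le_card (Finset.subset_inter Finset.subset_union_left (hBN B hB1))
      rw [hN', Finset.card_union_of_disjoint hWB.symm]
      omega
    · rw [Finset.union_comm] at h ⊢
      refine hEl.block r W A B hA hB2 (fun x hx => (mem_ground.1 (hAu hx)).1) ?_ hWA hWB h
      intro x hx y hy
      have := (mem_ground.1 (hAu hx)).2
      have := (Finset.mem_Ioc.1 (hB1 hy)).1
      omega

/-- Exactness: a shifted up-set without an `s`-matching that misses fewer than `C(L, r)` members
of `Q` is contained in `Q`. -/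
lemma subset_Qfam {G : Finset (Finset ℕ)} {r c s n L : ℕ} (hn : n = (r + 1) * s + c)
    (hLc : 2 * c + 1 < L) (hL : 2 * L + c + 1 ≤ s)
    (hroom : 2 * L + (2 * r + 1) + c * r ≤ n) (hEl : ElShift G) (hGn : ∀ X ∈ G, X ⊆ ground n)
    (hUp : ∀ X ∈ G, ∀ Y ⊆ ground n, X ⊆ Y → Y ∈ G) (hNo : NoMatch G s)
    (hmiss : (Qfam (r + 1) s c \ G).card < L.choose r) : G ⊆ Qfam (r + 1) s c := by
  intro X hX
  by_contra hXQ
  obtain ⟨N, hN⟩ : ∃ N, N + (2 * c + 1) = n := ⟨n - (2 * c + 1), by omega⟩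
  obtain ⟨u, hu⟩ : ∃ u, u + 2 * L = n := ⟨n - 2 * L, by omega⟩
  obtain ⟨v, hv⟩ : ∃ v, v + L = n := ⟨n - L, by omega⟩
  obtain ⟨Y, hXY, hYn, hYw⟩ := extend_to_weight hn hN (by omega) (hGn X hX) hXQ
  have hYG : Y ∈ G := hUp X hX Y hYn hXY
  have hYc := card_split (N := N) hYn
  obtain ⟨p, q, hpq, f, hdf, hf⟩ := fill hn hN hu (by omega) hL (by omega) hYw
  refine hNo (Option (Fin p ⊕ Fin q)) (by simp [hpq]) (fun o => o.elim Y f) ?_ ?_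
  · rintro (_ | i)
    · exact hYG
    · exact fill_mem hn hN hu hv hLc hEl hmiss (hf i).1
  · rintro (_ | i) (_ | l) hil
    · exact absurd rfl hil
    · exact (hf l).2.symm
    · exact (hf i).2
    · exact hdf (fun e => hil (by rw [e]))

/-! ### Large `s` and the empty set -/

lemma pow_le_mul_choose {r c s n : ℕ} (hn : n = (r + 1) * s + c) (hs : 8 * r + 8 ≤ s) :
    n ^ r ≤ (8 * (r + 1 + c)) ^ r * r.factorial * (s / 4).choose r := by
  have h1 : s ≤ 8 * (s / 4 + 1 - r) := by omega
  have h2 : n ≤ 8 * (r + 1 + c) * (s / 4 + 1 - r) := by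
    calc n = (r + 1) * s + c * 1 := by rw [hn, mul_one]
      _ ≤ (r + 1) * s + c * s := by gcongr; omega
      _ = (r + 1 + c) * s := by ring
      _ ≤ (r + 1 + c) * (8 * (s / 4 + 1 - r)) := Nat.mul_le_mul_left _ h1
      _ = _ := by ring
  calc n ^ r ≤ (8 * (r + 1 + c) * (s / 4 + 1 - r)) ^ r := Nat.pow_le_pow_left h2 r
    _ = (8 * (r + 1 + c)) ^ r * (s / 4 + 1 - r) ^ r := mul_pow _ _ _
    _ ≤ (8 * (r + 1 + c)) ^ r * (r.factorial * (s / 4).choose r) := by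
      rw [← Nat.descFactorial_eq_factorial_mul_choose]
      exact Nat.mul_le_mul_left _ (Nat.pow_sub_le_descFactorial _ _)
    _ = _ := by ring

/-- The main theorem for families that do not contain the empty set. -/
lemma eq_Qfam_of_empty_notMem (r c : ℕ) (hc : 2 ≤ c) : ∃ s0 : ℕ, ∀ s : ℕ, s0 ≤ s →
    ∀ F : Finset (Finset ℕ), F ⊆ (ground ((r + 1) * s + c)).powerset → ElShift F →
      ¬ HasMatching F s → F.card = (Qfam (r + 1) s c).card → ∅ ∉ F → F = Qfam (r + 1) s c := by
  -- `n ^ r ≤ Δ * C(s / 4, r)`, and `Q` misses at most `C1 * n ^ r` sets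
  obtain ⟨Δ, hΔ⟩ : ∃ Δ, Δ = (8 * (r + 1 + c)) ^ r * r.factorial := ⟨_, rfl⟩
  obtain ⟨C1, hC1⟩ : ∃ C1, C1 = 2 * c + 2 + 2 ^ (2 * c + 1) * r := ⟨_, rfl⟩
  obtain ⟨k, hk⟩ : ∃ k, k = C1 * Δ + c + 2 := ⟨_, rfl⟩
  obtain ⟨K, hK⟩ : ∃ K, K = k + c := ⟨_, rfl⟩
  obtain ⟨S, hS⟩ : ∃ S, S = stabConst r c K k := ⟨_, rfl⟩
  refine ⟨S * Δ + 8 * K + 8 * r + 2 * (c * r) + 8, ?_⟩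
  intro s hs F hF hEl hNo hcard h0
  obtain ⟨n, hn⟩ : ∃ n, n = (r + 1) * s + c := ⟨_, rfl⟩
  rw [← hn] at hF
  obtain ⟨L, hL⟩ : ∃ L, L = s / 4 := ⟨_, rfl⟩
  have hsn : s ≤ (r + 1) * s := Nat.le_mul_of_pos_left s (Nat.succ_pos r)
  have hpow : n ^ r ≤ Δ * L.choose r := by
    rw [hΔ, hL]
    exact pow_le_mul_choose hn (by omega)
  have hLpos : 0 < L.choose r := Nat.choose_pos (by omega)
  obtain ⟨G, hG⟩ : ∃ G, G = upc n F := ⟨_, rfl⟩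
  have hFG : F ⊆ G := fun X hX => by
    rw [hG]
    exact mem_upc.2 ⟨Finset.mem_powerset.1 (hF hX), X, hX, le_rfl⟩
  have hGn : ∀ X ∈ G, X ⊆ ground n := fun X hX => (mem_upc.1 (hG ▸ hX)).1
  have hGEl : ElShift G := hG ▸ hEl.upc
  have hGNo : NoMatch G s := hG ▸ noMatch_upc h0 hNo
  have hUp : ∀ X ∈ G, ∀ Y ⊆ ground n, X ⊆ Y → Y ∈ G := by
    intro X hX Y hY hXY
    obtain ⟨-, A, hA, hAX⟩ := mem_upc.1 (hG ▸ hX)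
    rw [hG]
    exact mem_upc.2 ⟨hY, A, hA, hAX.trans hXY⟩
  have hQn : Qfam (r + 1) s c ⊆ (ground n).powerset := by
    rw [hn]; exact Finset.filter_subset _ _
  have hD : ((ground n).powerset \ G).card ≤ ((ground n).powerset \ Qfam (r + 1) s c).card := by
    refine (Finset.card_le_card (Finset.sdiff_subset_sdiff le_rfl hFG)).trans ?_
    rw [Finset.card_sdiff_of_subset hF, Finset.card_sdiff_of_subset hQn, hcard]
  have hDK : ((ground n).powerset \ G).card < K * L.choose r := by
    obtain ⟨Err, hE1, hE2⟩ := Qfam_compl_bound (r := r) (s := s) (c := c) hn rfl (by omega)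
    have hE3 : Err ≤ Err * n := Nat.le_mul_of_pos_right _ (by omega)
    have hN : ((r + 1) * s - c - 1).choose r ≤ n ^ r :=
      (Nat.choose_le_pow _ _).trans (Nat.pow_le_pow_left (by omega) _)
    calc ((ground n).powerset \ G).card
        ≤ (2 * c + 2) * n ^ r + 2 ^ (2 * c + 1) * r * n ^ r :=
          hD.trans (hE1.trans (Nat.add_le_add (Nat.mul_le_mul_left _ hN) (hE3.trans hE2)))
      _ = C1 * n ^ r := by rw [hC1]; ring
      _ ≤ C1 * (Δ * L.choose r) := Nat.mul_le_mul_left _ hpow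
      _ = C1 * Δ * L.choose r := by ring
      _ < K * L.choose r := Nat.mul_lt_mul_of_pos_right (by omega) hLpos
  have hstab : (Qfam (r + 1) s c \ G).card * n ≤ S * n ^ r := by
    rw [hS]
    refine stability (L := L) hn (by omega) hK.symm (by omega) hc (by omega) (by omega) hGEl hUp
      hGNo ?_ hD
    intro C h1 h2 h3
    exact dense_layer hGEl hDK (by omega) (by omega) h1 h2 h3
  have hmiss : (Qfam (r + 1) s c \ G).card < L.choose r := by
    by_contra hcon
    have h1 : L.choose r * n ≤ L.choose r * (S * Δ) :=
      calc L.choose r * n ≤ (Qfam (r + 1) s c \ G).card * n :=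
            Nat.mul_le_mul_right _ (not_lt.1 hcon)
        _ ≤ S * (Δ * L.choose r) := hstab.trans (Nat.mul_le_mul_left _ hpow)
        _ = _ := by ring
    have := Nat.le_of_mul_le_mul_left h1 hLpos
    omega
  have hGQ : G ⊆ Qfam (r + 1) s c :=
    subset_Qfam (L := L) hn (by omega) (by omega) (by omega) hGEl hGn hUp hGNo hmiss
  exact Finset.eq_of_subset_of_card_le (hFG.trans hGQ) hcard.ge

/-- Trading `∅` for a missing set `Y` of least element sum keeps the family shifted and creates
no `s`-matching. -/
lemma exists_exchange {n s : ℕ} {F : Finset (Finset ℕ)} (hsn : s ≤ n)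
    (hEl : ElShift F) (hNo : ¬ HasMatching F s) (h0 : ∅ ∈ F) :
    ∃ Y ⊆ ground n, Y ∉ F ∧ Y ≠ ∅ ∧ ElShift (insert Y (F.erase ∅)) ∧
      ¬ HasMatching (insert Y (F.erase ∅)) s := by
  have hne : ((ground n).powerset \ F).Nonempty := by
    by_contra hcon
    rw [Finset.not_nonempty_iff_eq_empty, Finset.sdiff_eq_empty_iff_subset] at hcon
    -- all singletons would be present
    refine hNo ⟨(ground s).image (fun x => {x}), ?_, ?_, ?_⟩
    · intro X hX
      obtain ⟨x, hx, rfl⟩ := Finset.mem_image.1 hX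
      exact hcon (Finset.mem_powerset.2 (by simpa using ground_mono hsn hx))
    · rw [Finset.card_image_of_injective _ Finset.singleton_injective, card_ground]
    · intro A hA B hB hAB
      obtain ⟨x, -, rfl⟩ := Finset.mem_image.1 (Finset.mem_coe.1 hA)
      obtain ⟨y, -, rfl⟩ := Finset.mem_image.1 (Finset.mem_coe.1 hB)
      simp only [Function.onFun, id, Finset.disjoint_singleton]
      exact fun e => hAB (by rw [e])
  obtain ⟨Y, hY, hmin⟩ := Finset.exists_min_image _ (fun Z => ∑ x ∈ Z, x) hne
  obtain ⟨hYn, hYF⟩ := Finset.mem_sdiff.1 hY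
  rw [Finset.mem_powerset] at hYn
  have hY0 : Y ≠ ∅ := fun h => hYF (h ▸ h0)
  have h0' : ∅ ∉ insert Y (F.erase ∅) := by simp [hY0.symm]
  refine ⟨Y, hYn, hYF, hY0, ?_, ?_⟩
  · intro X hX x hx y hy hyx hyX
    refine Finset.mem_insert_of_mem (Finset.mem_erase.2 ⟨Finset.insert_ne_empty _ _, ?_⟩)
    rcases Finset.mem_insert.1 hX with rfl | hX
    · by_contra hcon
      have h1 := hmin _ (Finset.mem_sdiff.2 ⟨Finset.mem_powerset.2 (Finset.insert_subset
        (mem_ground.2 ⟨hy, by have := mem_ground.1 (hYn hx); omega⟩)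
        ((Finset.erase_subset _ _).trans hYn)), hcon⟩)
      rw [Finset.sum_insert (fun h => hyX (Finset.mem_of_mem_erase h)),
        ← Finset.add_sum_erase X (fun x => x) hx] at h1
      omega
    · exact hEl X (Finset.mem_of_mem_erase hX) x hx y hy hyx hyX
  · rintro ⟨M, hM, hMs, hMd⟩
    have hMF : ∀ A ∈ M, A ≠ Y → A ∈ F := by
      intro A hA hAY
      rcases Finset.mem_insert.1 (hM hA) with h | h
      · exact absurd h hAY
      · exact Finset.mem_of_mem_erase h
    by_cases hYM : Y ∈ M
    · refine hNo ⟨insert ∅ (M.erase Y), ?_, ?_, ?_⟩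
      · intro A hA
        rcases Finset.mem_insert.1 hA with rfl | hA
        · exact h0
        · exact hMF A (Finset.mem_of_mem_erase hA) (Finset.ne_of_mem_erase hA)
      · rw [Finset.card_insert_of_notMem (fun h => h0' (hM (Finset.mem_of_mem_erase h))),
          Finset.card_erase_add_one hYM, hMs]
      · rw [Finset.coe_insert]
        refine Set.PairwiseDisjoint.insert (hMd.subset ?_) (fun A _ _ => by simp)
        exact_mod_cast Finset.erase_subset _ _
    · exact hNo ⟨M, fun A hA => hMF A hA (fun e => hYM (e ▸ hA)), hMs, hMd⟩

/-- Deleting a nonempty set `Y` from `Q` still leaves `s - 1` disjoint members: a member of such a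
matching equal to `Y` can be enlarged by the point `n`, which the matching avoids. -/
lemma hasMatching_erase {r c s n : ℕ} (hn : n = (r + 1) * s + c)
    (hs : r + 1 + c * r + 3 * c + 3 ≤ s) {Y : Finset ℕ} (hY0 : Y ≠ ∅) :
    ∃ t, t + 1 = s ∧ HasMatching ((Qfam (r + 1) s c).erase Y) t := by
  have hsn : s ≤ (r + 1) * s := Nat.le_mul_of_pos_left s (Nat.succ_pos r)
  obtain ⟨N, hN⟩ : ∃ N, N + (2 * c + 1) = n := ⟨n - (2 * c + 1), by omega⟩
  obtain ⟨u, hu⟩ : ∃ u, u + 2 * (c + 1) = n := ⟨n - 2 * (c + 1), by omega⟩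
  have hrN : ground r ⊆ ground N := ground_mono (by omega)
  have hnT : n ∈ Finset.Ioc N n := Finset.mem_Ioc.2 (by omega)
  have hnN : n ∉ ground N := fun h => by
    have := mem_ground.1 h
    omega
  have h1 : insert n (ground r) ∩ ground N = ground r := by
    rw [Finset.insert_inter_of_notMem hnN, Finset.inter_eq_left.2 hrN]
  have h2 : insert n (ground r) ∩ Finset.Ioc N n = {n} := by
    rw [Finset.insert_inter_of_mem hnT, Finset.disjoint_iff_inter_eq_empty.1
      (disj_ground_Ioc le_rfl hrN le_rfl), insert_empty_eq]
  have h3 : (insert n (ground r)).card = r + 1 := by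
    rw [Finset.card_insert_of_notMem (fun h => hnN (hrN h)), card_ground]
  obtain ⟨p, q, hpq, X, hXd, hX⟩ := fill (Y := insert n (ground r)) hn hN hu (by omega) (by omega)
    (by omega) (by rw [h1, h2, card_ground, Finset.card_singleton])
  have hXn : ∀ i, n ∉ X i := fun i h =>
    Finset.disjoint_left.1 (hX i).2 h (Finset.mem_insert_self _ _)
  have hXQ : ∀ i, X i ∈ Qfam (r + 1) s c := fun i => (hX i).1.mem_Qfam hn hN (by omega)
  refine ⟨p + q, hpq, ?_⟩
  have h0 : ∅ ∉ (Qfam (r + 1) s c).erase Y := fun h => by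
    simpa using (mem_Qfam.1 (Finset.mem_of_mem_erase h)).2
  have := hasMatching_of_indexed h0 (fun i => if X i = Y then insert n (X i) else X i) ?_ ?_
  · simpa using this
  · intro i j hij
    have hd : Disjoint (X i) (X j) := hXd hij
    by_cases hi : X i = Y <;> by_cases hj : X j = Y
    · rw [hi, hj, disjoint_self] at hd
      exact absurd hd hY0
    · simp only [if_pos hi, if_neg hj]
      exact Finset.disjoint_insert_left.2 ⟨hXn j, hd⟩
    · simp only [if_neg hi, if_pos hj]
      exact Finset.disjoint_insert_right.2 ⟨hXn i, hd⟩
    · simp only [if_neg hi, if_neg hj]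
      exact hd
  · intro i
    refine ⟨_, ?_, le_rfl⟩
    by_cases hi : X i = Y
    · simp only [if_pos hi]
      refine Finset.mem_erase.2 ⟨fun e => hXn i ?_, Qfam_up (hXQ i) (Finset.subset_insert _ _) ?_⟩
      · rw [hi, ← e]
        exact Finset.mem_insert_self _ _
      · exact Finset.insert_subset (mem_ground.2 (by omega)) (mem_Qfam.1 (hXQ i)).1
    · simp only [if_neg hi]
      exact Finset.mem_erase.2 ⟨hi, hXQ i⟩

theorem stmt_1 (m c : ℕ) (hm : 1 ≤ m) (hc : 2 ≤ c) :
    ∃ s0 : ℕ, ∀ s : ℕ, s0 ≤ s →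
      ∀ F : Finset (Finset ℕ), F ⊆ (ground (m * s + c)).powerset →
        IsShifted F → ¬ HasMatching F s → F.card = (Qfam m s c).card →
          F = Qfam m s c := by
  obtain ⟨r, rfl⟩ : ∃ r, m = r + 1 := ⟨m - 1, by omega⟩
  obtain ⟨s0, hs0⟩ := eq_Qfam_of_empty_notMem r c hc
  refine ⟨s0 + (r + 1 + c * r + 3 * c + 3), fun s hs F hF hSh hNo hcard => ?_⟩
  have hEl : ElShift F := hSh.elShift hF
  by_cases h0 : ∅ ∈ F
  · exfalso
    have hsn : s ≤ (r + 1) * s := Nat.le_mul_of_pos_left s (Nat.succ_pos r)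
    obtain ⟨Y, hYn, hYF, hY0, hEl', hNo'⟩ := exists_exchange
      (n := (r + 1) * s + c) (by omega) hEl hNo h0
    have hYE : Y ∉ F.erase ∅ := fun h => hYF (Finset.mem_of_mem_erase h)
    have hQ := hs0 s (by omega) (insert Y (F.erase ∅))
      (Finset.insert_subset (Finset.mem_powerset.2 hYn) ((Finset.erase_subset _ _).trans hF))
      hEl' hNo' (by rw [Finset.card_insert_of_notMem hYE, Finset.card_erase_add_one h0, hcard])
      (by simp [hY0.symm])
    obtain ⟨t, ht, M, hM, hMt, hMd⟩ := hasMatching_erase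
      (r := r) (s := s) (c := c) rfl (by omega) hY0
    rw [← hQ, Finset.erase_insert hYE] at hM
    -- adding `∅` to `s - 1` disjoint members of `F` gives an `s`-matching
    refine hNo ⟨insert ∅ M, ?_, ?_, ?_⟩
    · exact Finset.insert_subset h0 (hM.trans (Finset.erase_subset _ _))
    · rw [Finset.card_insert_of_notMem (fun h => Finset.notMem_erase _ _ (hM h)), hMt, ht]
    · rw [Finset.coe_insert]
      exact Set.PairwiseDisjoint.insert hMd (fun A _ _ => by simp)
  · exact hs0 s (by omega) F hF hEl hNo hcard h0
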